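/- Let p_{Y|X} and p_{Z|X} be channels on finite alphabets 𝒳, 𝒴, 𝒵, and let r, α, κ be positive real numbers. Suppose there exist finitely supported random variables W, U, X such that (U,W) → X → (Y,Z) is a Markov chain, where conditionally on X the outputs satisfy Y ∼ p_{Y|X}(·|X) and Z ∼ p_{Z|X}(·|X), and such that r + α ≤ I(Y;U,W), α ≤ I(Y;U|W) − I(Z;U|W), and α − κ ≤ 0. Then (r, α, κ) ∈ C_TA(p_{Y|X}, p_{Z|X}). -/

import Mathlib

open scoped BigOperators Classical

noncomputable section

/-- A stochastic map (conditional probability distribution): for each `b`,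
`p b ∈ P(A)` is a probability mass function on `A`. -/
def IsStochastic {B A : Type*} [Fintype A] (p : B → A → ℝ) : Prop :=
  (∀ b a, 0 ≤ p b a) ∧ ∀ b, ∑ a, p b a = 1

/-- The blocklength-`n` memoryless extension of a channel, acting componentwise. -/
def memExt {X Y : Type*} (W : X → Y → ℝ) (n : ℕ) : (Fin n → X) → (Fin n → Y) → ℝ :=
  fun x y => ∏ i, W (x i) (y i)

/-- Shannon entropy (base 2) of a finitely supported pmf. -/
def ent {A : Type*} [Fintype A] (p : A → ℝ) : ℝ := -∑ a, p a * Real.logb 2 (p a)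

variable {𝒳 𝒴 𝒵 : Type} [Fintype 𝒳] [Fintype 𝒴] [Fintype 𝒵]

/-- The joint pmf of (channel output, message, key) induced by a code:
the message `M` and the key `K` are independent and uniform, `Xⁿ ∼ f(·|M,K)`,
and the output is obtained through the memoryless extension of the channel `Ch`. -/
def pOut {M K 𝒪 : Type*} [Fintype M] [Fintype K] [Fintype 𝒳]
    (Ch : 𝒳 → 𝒪 → ℝ) (n : ℕ) (f : M × K → (Fin n → 𝒳) → ℝ) :
    (Fin n → 𝒪) → M → K → ℝ :=
  fun o m k => ∑ x, ((Fintype.card M : ℝ))⁻¹ * ((Fintype.card K : ℝ))⁻¹ *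
    f (m, k) x * memExt Ch n x o

/-- `(f, φ)` is an `(r, α, κ, δ, n)`-TA (typical authentication) code for the
DM-AIC`(Wc, Vc)`: the message rate `n⁻¹ log₂ |M|` is at least `r`, the key
consumption rate `n⁻¹ log₂ |K|` is at most `κ`, the probability of message error
is at most `δ`, and for every attack channel `ψ`, the probability (under the joint
law of `(Zⁿ, M, K)`) that `−n⁻¹ log₂ ω_{f,φ}(Zⁿ,M,K) < α`, i.e. that
`ω_{f,φ}(Zⁿ,M,K) > 2^{−nα}`, is at most `δ`. -/
def IsTACode {M K : Type*} [Fintype M] [Fintype K]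
    (Wc : 𝒳 → 𝒴 → ℝ) (Vc : 𝒳 → 𝒵 → ℝ) (r α κ δ : ℝ) (n : ℕ)
    (f : M × K → (Fin n → 𝒳) → ℝ)
    (φ : (Fin n → 𝒴) × K → Option M → ℝ) : Prop :=
  IsStochastic f ∧ IsStochastic φ ∧
  r ≤ Real.logb 2 (Fintype.card M) / n ∧
  Real.logb 2 (Fintype.card K) / n ≤ κ ∧
  1 - (∑ y, ∑ m, ∑ k, pOut Wc n f y m k * φ (y, k) (some m)) ≤ δ ∧
  ∀ ψ : (Fin n → 𝒵) → (Fin n → 𝒴) → ℝ, IsStochastic ψ →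
    (∑ z, ∑ m, ∑ k,
      (if (2 : ℝ) ^ (-(n : ℝ) * α) <
          ∑ y, ψ z y * ∑ m' ∈ Finset.univ.erase m, φ (y, k) (some m')
        then pOut Vc n f z m k else 0)) ≤ δ

/-- The typical authentication capacity region `C_TA(Wc, Vc)`: the set of triples
`(r, α, κ)` with `r > 0` such that for each blocklength `i ∈ ℤ⁺` there is an
`(rᵢ, αᵢ, κᵢ, δᵢ, i)`-TA code with `(rᵢ, αᵢ, κᵢ, δᵢ) → (r, α, κ, 0)`. -/
def CTA (Wc : 𝒳 → 𝒴 → ℝ) (Vc : 𝒳 → 𝒵 → ℝ) : Set (ℝ × ℝ × ℝ) :=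
  { t | 0 < t.1 ∧ ∃ rs αs κs ds : ℕ → ℝ,
      (∀ i : ℕ, 0 < i → ∃ (Mc Kc : ℕ) (f : Fin Mc × Fin Kc → (Fin i → 𝒳) → ℝ)
          (φ : (Fin i → 𝒴) × Fin Kc → Option (Fin Mc) → ℝ),
          IsTACode Wc Vc (rs i) (αs i) (κs i) (ds i) i f φ) ∧
      Filter.Tendsto (fun i => (rs i, αs i, κs i, ds i)) Filter.atTop
        (nhds (t.1, t.2.1, t.2.2, 0)) }

section MutualInformation

variable {𝒲 𝒰 𝒳' 𝒪 : Type*} [Fintype 𝒲] [Fintype 𝒰] [Fintype 𝒳'] [Fintype 𝒪]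

/-- For the joint law `p(w,u,x,o) = q(w,u,x)·Ch(o|x)` (so that `(U,W) → X → O` is a
Markov chain and `O` is the output of the channel `Ch` on input `X`):
the mutual information `I(O; U, W)`, computed as `H(O) + H(U,W) − H(O,U,W)`. -/
def miO_UW (q : 𝒲 × 𝒰 × 𝒳' → ℝ) (Ch : 𝒳' → 𝒪 → ℝ) : ℝ :=
  ent (fun o : 𝒪 => ∑ w, ∑ u, ∑ x, q (w, u, x) * Ch x o)
  + ent (fun p : 𝒰 × 𝒲 => ∑ x, q (p.2, p.1, x))
  - ent (fun p : 𝒪 × 𝒰 × 𝒲 => ∑ x, q (p.2.2, p.2.1, x) * Ch x p.1)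

/-- The conditional mutual information `I(O; U | W)`, computed as
`H(O,W) + H(U,W) − H(O,U,W) − H(W)`. -/
def miO_U_W (q : 𝒲 × 𝒰 × 𝒳' → ℝ) (Ch : 𝒳' → 𝒪 → ℝ) : ℝ :=
  ent (fun p : 𝒪 × 𝒲 => ∑ u, ∑ x, q (p.2, u, x) * Ch x p.1)
  + ent (fun p : 𝒰 × 𝒲 => ∑ x, q (p.2, p.1, x))
  - ent (fun p : 𝒪 × 𝒰 × 𝒲 => ∑ x, q (p.2.2, p.2.1, x) * Ch x p.1)
  - ent (fun w : 𝒲 => ∑ u, ∑ x, q (w, u, x))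

/-- The mutual information `I(O; W)`, computed as `H(O) + H(W) − H(O,W)`. -/
def miO_W (q : 𝒲 × 𝒰 × 𝒳' → ℝ) (Ch : 𝒳' → 𝒪 → ℝ) : ℝ :=
  ent (fun o : 𝒪 => ∑ w, ∑ u, ∑ x, q (w, u, x) * Ch x o)
  + ent (fun w : 𝒲 => ∑ u, ∑ x, q (w, u, x))
  - ent (fun p : 𝒪 × 𝒲 => ∑ u, ∑ x, q (p.2, u, x) * Ch x p.1)

end MutualInformation

/-!
Superposition random coding: a message is a pair `(i, l)` of a cloud index and a satellite index,
and under the key `k` it is sent as the codeword with cloud center `W(i)` and satellite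
`U(i, l, k)`. The receiver looks for the unique triple `(i, l, k')` jointly typical with his
observation and accepts `(i, l)` when `k'` is the shared key, so a given forgery is accepted under
at most one key. If the rate of `l` exceeds `I(Z; U | W)`, soft covering makes the adversary's
observation nearly independent of the key even given the cloud, and his forgery meets the right key
with probability about `1 / |K|`.
-/

open Finset
open Filter Topology

section Expectation

variable {Ω Ω' ι : Type*} [Fintype Ω'] [Fintype Ω]

/-- The expectation of `f` under the finite law `μ`. -/
def mean (μ f : Ω → ℝ) : ℝ := ∑ ω, μ ω * f ω

/-- The probability of the event `S` under the finite law `μ`. -/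
def prob (μ : Ω → ℝ) (S : Set Ω) : ℝ := mean μ (S.indicator 1)

variable {μ ν f g : Ω → ℝ} {S T : Set Ω}

lemma mean_add (μ f g : Ω → ℝ) :
    mean μ (fun ω => f ω + g ω) = mean μ f + mean μ g := by
  simp only [mean, mul_add, sum_add_distrib]

lemma mean_sub (μ f g : Ω → ℝ) :
    mean μ (fun ω => f ω - g ω) = mean μ f - mean μ g := by
  simp only [mean, mul_sub, sum_sub_distrib]

lemma mean_const_mul (μ f : Ω → ℝ) (c : ℝ) :
    mean μ (fun ω => c * f ω) = c * mean μ f := by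
  simp only [mean, mul_left_comm, mul_sum]

lemma mean_sum (μ : Ω → ℝ) (s : Finset ι) (F : ι → Ω → ℝ) :
    mean μ (fun ω => ∑ i ∈ s, F i ω) = ∑ i ∈ s, mean μ (F i) := by
  simp only [mean, mul_sum]
  exact sum_comm

lemma mean_comm (μ : Ω → ℝ) (ν : Ω' → ℝ) (F : Ω → Ω' → ℝ) :
    mean μ (fun ω => mean ν (F ω)) = mean ν (fun ω' => mean μ (fun ω => F ω ω')) := by
  simp only [mean, mul_sum]
  rw [sum_comm]
  exact sum_congr rfl fun _ _ => sum_congr rfl fun _ _ => mul_left_comm _ _ _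

lemma mean_const (hμ : μ ∈ stdSimplex ℝ Ω) (c : ℝ) : mean μ (fun _ => c) = c := by
  rw [mean, ← sum_mul, hμ.2, one_mul]

lemma mean_mono (hμ : ∀ ω, 0 ≤ μ ω) (h : ∀ ω, f ω ≤ g ω) : mean μ f ≤ mean μ g :=
  sum_le_sum fun ω _ => mul_le_mul_of_nonneg_left (h ω) (hμ ω)

lemma mean_nonneg (hμ : ∀ ω, 0 ≤ μ ω) (hf : ∀ ω, 0 ≤ f ω) : 0 ≤ mean μ f :=
  sum_nonneg fun ω _ => mul_nonneg (hμ ω) (hf ω)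

lemma exists_le_of_mean_le (hμ : μ ∈ stdSimplex ℝ Ω) {b : ℝ} (h : mean μ f ≤ b) :
    ∃ ω, f ω ≤ b := by
  by_contra! hlt
  have hmono : ∀ ω ∈ univ, μ ω * b ≤ μ ω * f ω := fun ω _ =>
    mul_le_mul_of_nonneg_left (hlt ω).le (hμ.1 ω)
  have heq : ∑ ω, μ ω * b = ∑ ω, μ ω * f ω :=
    le_antisymm (sum_le_sum hmono) (by rwa [← sum_mul, hμ.2, one_mul])
  have hzero : ∀ ω ∈ univ, μ ω = 0 := fun ω hω =>
    (mul_eq_mul_left_iff.mp ((sum_eq_sum_iff_of_le hmono).mp heq ω hω)).resolve_left (hlt ω).ne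
  exact zero_ne_one ((sum_eq_zero hzero).symm.trans hμ.2)

lemma mean_abs_le_sqrt (hμ : μ ∈ stdSimplex ℝ Ω) (f : Ω → ℝ) :
    mean μ (fun ω => |f ω|) ≤ √(mean μ (fun ω => f ω ^ 2)) := by
  refine Real.le_sqrt_of_sq_le ?_
  simpa only [sq_abs, mean] using Real.pow_arith_mean_le_arith_mean_pow univ μ (fun ω => |f ω|)
    (fun ω _ => hμ.1 ω) hμ.2 (fun ω _ => abs_nonneg _) 2

lemma mean_le_of_le (hμ : μ ∈ stdSimplex ℝ Ω) {c : ℝ} (h : ∀ ω, f ω ≤ c) : mean μ f ≤ c :=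
  (mean_mono hμ.1 h).trans_eq (mean_const hμ c)

lemma prob_nonneg (hμ : ∀ ω, 0 ≤ μ ω) (S : Set Ω) : 0 ≤ prob μ S :=
  mean_nonneg hμ fun _ => Set.indicator_nonneg (fun _ _ => zero_le_one) _

lemma prob_mono_of_pos (hμ : ∀ ω, 0 ≤ μ ω) (h : ∀ ω, 0 < μ ω → ω ∈ S → ω ∈ T) :
    prob μ S ≤ prob μ T := by
  refine sum_le_sum fun ω _ => ?_
  rcases (hμ ω).eq_or_lt with h0 | hpos
  · simp only [← h0, zero_mul, le_refl]
  · refine mul_le_mul_of_nonneg_left ?_ (hμ ω)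
    by_cases hS : ω ∈ S
    · simp only [Set.indicator_of_mem hS, Set.indicator_of_mem (h ω hpos hS), le_refl]
    · rw [Set.indicator_of_notMem hS]
      exact Set.indicator_nonneg (fun _ _ => zero_le_one) ω

lemma prob_mono (hμ : ∀ ω, 0 ≤ μ ω) (hST : S ⊆ T) : prob μ S ≤ prob μ T :=
  prob_mono_of_pos hμ fun _ _ hω => hST hω

lemma prob_union_le (hμ : ∀ ω, 0 ≤ μ ω) (S T : Set Ω) :
    prob μ (S ∪ T) ≤ prob μ S + prob μ T := by
  rw [prob, prob, prob, ← mean_add]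
  refine mean_mono hμ fun ω => ?_
  by_cases hS : ω ∈ S <;> by_cases hT : ω ∈ T <;> simp [hS, hT]

lemma prob_compl (hμ : μ ∈ stdSimplex ℝ Ω) (S : Set Ω) : prob μ Sᶜ = 1 - prob μ S := by
  rw [prob, Set.indicator_compl, ← mean_const hμ 1]
  exact mean_sub μ _ _

lemma prob_le_one (hμ : μ ∈ stdSimplex ℝ Ω) (S : Set Ω) : prob μ S ≤ 1 := by
  linarith [prob_compl hμ S, prob_nonneg hμ.1 Sᶜ]

lemma prob_lt_le_mean_div (hμ : ∀ ω, 0 ≤ μ ω) (hf : ∀ ω, 0 ≤ f ω) {t : ℝ} (ht : 0 < t) :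
    prob μ {ω | t < f ω} ≤ mean μ f / t := by
  rw [le_div_iff₀ ht, mul_comm, prob, ← mean_const_mul]
  refine mean_mono hμ fun ω => ?_
  by_cases h : t < f ω
  · simpa [h] using h.le
  · simpa [h] using hf ω

/-- Change of measure: an event on which `t * ν` is dominated by the law `μ` has `ν`-probability
at most `t⁻¹`. -/
lemma prob_le_inv_of_mul_le (hμ : μ ∈ stdSimplex ℝ Ω) {t : ℝ} (ht : 0 < t)
    (h : ∀ ω ∈ T, t * ν ω ≤ μ ω) : prob ν T ≤ t⁻¹ := by
  have hle : t * prob ν T ≤ prob μ T := by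
    rw [prob, ← mean_const_mul]
    refine sum_le_sum fun ω _ => ?_
    by_cases hω : ω ∈ T
    · simpa [hω, mul_comm] using h ω hω
    · simp [hω]
  rw [← one_div, le_div_iff₀' ht]
  exact hle.trans (prob_le_one hμ T)

end Expectation

section Laws

variable {A B : Type*} [Fintype B]

/-- The uniform law on a finite type. -/
def uniformLaw (Ω : Type*) [Fintype Ω] : Ω → ℝ := fun _ => (Fintype.card Ω : ℝ)⁻¹

/-- The law of a pair `(a, b)` where `a` has law `p` and `b` is the output of the channel `P` on
input `a`. -/
def jointLaw (p : A → ℝ) (P : A → B → ℝ) : A × B → ℝ := fun ab => p ab.1 * P ab.1 ab.2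

/-- The law of the output of the channel `P` when its input has law `p`. -/
def outputLaw [Fintype A] (p : A → ℝ) (P : A → B → ℝ) : B → ℝ := fun b => ∑ a, p a * P a b

variable {p : A → ℝ} {P : A → B → ℝ}

lemma IsStochastic.mem_stdSimplex (hP : IsStochastic P) (a : A) : P a ∈ stdSimplex ℝ B :=
  ⟨hP.1 a, hP.2 a⟩

lemma isStochastic_of_mem_stdSimplex (hP : ∀ a, P a ∈ stdSimplex ℝ B) : IsStochastic P :=
  ⟨fun a => (hP a).1, fun a => (hP a).2⟩

lemma uniformLaw_mem_stdSimplex (Ω : Type*) [Fintype Ω] [Nonempty Ω] :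
    uniformLaw Ω ∈ stdSimplex ℝ Ω :=
  ⟨fun _ => by unfold uniformLaw; positivity, by simp [uniformLaw]⟩

variable [Fintype A]

lemma mean_uniformLaw (f : A → ℝ) :
    mean (uniformLaw A) f = (Fintype.card A : ℝ)⁻¹ * ∑ a, f a :=
  (mul_sum _ _ _).symm

lemma mean_jointLaw (p : A → ℝ) (P : A → B → ℝ) (f : A × B → ℝ) :
    mean (jointLaw p P) f = mean p (fun a => mean (P a) (fun b => f (a, b))) := by
  simp only [mean, jointLaw, Fintype.sum_prod_type, mul_assoc, mul_sum]

lemma mean_outputLaw (p : A → ℝ) (P : A → B → ℝ) (f : B → ℝ) :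
    mean (outputLaw p P) f = mean p (fun a => mean (P a) f) := by
  simp only [mean, outputLaw, sum_mul, mul_sum, mul_assoc]
  exact sum_comm

lemma prob_outputLaw (p : A → ℝ) (P : A → B → ℝ) (S : Set B) :
    prob (outputLaw p P) S = mean p (fun a => prob (P a) S) :=
  mean_outputLaw p P _

lemma prob_jointLaw (p : A → ℝ) (P : A → B → ℝ) (S : Set (A × B)) :
    prob (jointLaw p P) S = mean p (fun a => prob (P a) {b | (a, b) ∈ S}) :=
  mean_jointLaw p P _

lemma sum_outputLaw (p : A → ℝ) (hP : IsStochastic P) : ∑ b, outputLaw p P b = ∑ a, p a := by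
  simp only [outputLaw]
  rw [sum_comm]
  simp only [← mul_sum, hP.2, mul_one]

lemma jointLaw_mem_stdSimplex (hp : p ∈ stdSimplex ℝ A) (hP : IsStochastic P) :
    jointLaw p P ∈ stdSimplex ℝ (A × B) :=
  ⟨fun _ => mul_nonneg (hp.1 _) (hP.1 _ _), by
    simp only [jointLaw, Fintype.sum_prod_type, ← mul_sum, hP.2, mul_one, hp.2]⟩

lemma outputLaw_mem_stdSimplex (hp : p ∈ stdSimplex ℝ A) (hP : IsStochastic P) :
    outputLaw p P ∈ stdSimplex ℝ B :=
  ⟨fun _ => sum_nonneg fun _ _ => mul_nonneg (hp.1 _) (hP.1 _ _), by rw [sum_outputLaw p hP, hp.2]⟩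

lemma IsStochastic.comp {D : Type*} {R : D → A → ℝ} (hR : IsStochastic R) (hP : IsStochastic P) :
    IsStochastic (fun d => outputLaw (R d) P) :=
  isStochastic_of_mem_stdSimplex fun d => outputLaw_mem_stdSimplex (hR.mem_stdSimplex d) hP

end Laws

section ProductLaws

variable {ι A B : Type*} [Fintype ι]

/-- The law of a family of independent variables with laws `μ i`. -/
def prodLaw (μ : ι → A → ℝ) : (ι → A) → ℝ := fun c => ∏ i, μ i (c i)

/-- The law of a family of independent variables with common law `μ`. -/
abbrev iidLaw (ι : Type*) [Fintype ι] (μ : A → ℝ) : (ι → A) → ℝ := prodLaw fun _ : ι => μ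

variable [DecidableEq ι] [Fintype A] {μ : ι → A → ℝ}

lemma mean_prodLaw_prod (μ f : ι → A → ℝ) :
    mean (prodLaw μ) (fun c => ∏ i, f i (c i)) = ∏ i, mean (μ i) (f i) := by
  simp only [mean, prodLaw, ← prod_mul_distrib]
  rw [prod_univ_sum, Fintype.piFinset_univ]

lemma prodLaw_mem_stdSimplex (hμ : ∀ i, μ i ∈ stdSimplex ℝ A) :
    prodLaw μ ∈ stdSimplex ℝ (ι → A) := by
  refine ⟨fun c => prod_nonneg fun i _ => (hμ i).1 _, ?_⟩
  simpa [mean, (hμ _).2] using mean_prodLaw_prod μ (fun _ _ => 1)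

lemma iidLaw_mem_stdSimplex {ν : A → ℝ} (hν : ν ∈ stdSimplex ℝ A) :
    iidLaw ι ν ∈ stdSimplex ℝ (ι → A) :=
  prodLaw_mem_stdSimplex fun _ => hν

lemma mean_prodLaw_apply (hμ : ∀ i, μ i ∈ stdSimplex ℝ A) (i : ι) (f : A → ℝ) :
    mean (prodLaw μ) (fun c => f (c i)) = mean (μ i) f := by
  have h := mean_prodLaw_prod μ (fun k a => if k = i then f a else 1)
  simp only [prod_ite_eq', mem_univ, if_true] at h
  rw [h, prod_eq_single i]
  · simp
  · intro k _ hk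
    simpa [hk] using mean_const (hμ k) 1
  · simp

lemma mean_prodLaw_apply_mul (hμ : ∀ i, μ i ∈ stdSimplex ℝ A) {i j : ι} (hij : i ≠ j)
    (f g : A → ℝ) :
    mean (prodLaw μ) (fun c => f (c i) * g (c j)) = mean (μ i) f * mean (μ j) g := by
  have h := mean_prodLaw_prod μ
    (fun k a => (if k = i then f a else 1) * (if k = j then g a else 1))
  simp only [prod_mul_distrib, prod_ite_eq', mem_univ, if_true] at h
  rw [h, prod_eq_mul i j hij]
  · simp [hij, hij.symm]
  · rintro k - ⟨hki, hkj⟩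
    simpa [hki, hkj] using mean_const (hμ k) 1
  · simp
  · simp

lemma mean_prodLaw_apply₂ (hμ : ∀ i, μ i ∈ stdSimplex ℝ A) {i j : ι} (hij : i ≠ j)
    (F : A → A → ℝ) :
    mean (prodLaw μ) (fun c => F (c i) (c j)) =
      mean (μ i) (fun a => mean (μ j) (F a)) := by
  have hF : ∀ c : ι → A, F (c i) (c j) = ∑ a, (if c i = a then 1 else 0) * F a (c j) := by simp
  simp only [hF]
  rw [mean_sum]
  calc _ = ∑ a, mean (μ i) (fun b => if b = a then 1 else 0) * mean (μ j) (F a) :=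
        sum_congr rfl fun a _ =>
          mean_prodLaw_apply_mul hμ hij (fun b => if b = a then 1 else 0) (F a)
    _ = _ := by simp [mean]

lemma outputLaw_prodLaw (μ : ι → A → ℝ) (P : ι → A → B → ℝ) :
    outputLaw (prodLaw μ) (fun c => prodLaw fun i => P i (c i)) =
      prodLaw fun i => outputLaw (μ i) (P i) :=
  funext fun y => mean_prodLaw_prod μ fun i a => P i a (y i)

lemma mean_jointLaw_iidLaw [Fintype B] (p : A → ℝ) (P : A → B → ℝ) (f : (ι → A × B) → ℝ) :
    mean (jointLaw (iidLaw ι p) (fun w => prodLaw fun i => P (w i)))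
      (fun wu => f (fun i => (wu.1 i, wu.2 i))) = mean (iidLaw ι (jointLaw p P)) f := by
  refine (Fintype.sum_equiv (Equiv.arrowProdEquivProdArrow ι (fun _ => A) fun _ => B) _ _
    fun c => ?_).symm
  simp only [prodLaw, jointLaw, Equiv.arrowProdEquivProdArrow, Equiv.coe_fn_mk, prod_mul_distrib]

end ProductLaws

lemma IsStochastic.memExt {A B : Type*} [Fintype B] {P : A → B → ℝ} (hP : IsStochastic P) (n : ℕ) :
    IsStochastic (memExt P n) :=
  isStochastic_of_mem_stdSimplex fun x => prodLaw_mem_stdSimplex fun i => hP.mem_stdSimplex (x i)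

lemma IsStochastic.iidLaw {A B J : Type*} [Fintype B] [Fintype J] [DecidableEq J]
    {P : A → B → ℝ} (hP : IsStochastic P) : IsStochastic (fun w => iidLaw J (P w)) :=
  isStochastic_of_mem_stdSimplex fun w => iidLaw_mem_stdSimplex (hP.mem_stdSimplex w)

section SampleMean

variable {Ω ι L A : Type*} [Fintype Ω] [Fintype ι] [DecidableEq ι] [Fintype L] [Fintype A]

lemma mean_sq_sum_of_orthogonal {μ : Ω → ℝ} {X : L → Ω → ℝ}
    (hX : Pairwise fun l l' => mean μ (fun ω => X l ω * X l' ω) = 0) :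
    mean μ (fun ω => (∑ l, X l ω) ^ 2) = ∑ l, mean μ (fun ω => X l ω ^ 2) := by
  simp only [sq, sum_mul_sum]
  rw [mean_sum]
  refine sum_congr rfl fun l _ => ?_
  rw [mean_sum]
  exact sum_eq_single l (fun l' _ hl' => hX hl'.symm) (by simp)

lemma mean_sq_sub_le {ν : A → ℝ} (hν : ν ∈ stdSimplex ℝ A) (f : A → ℝ) :
    mean ν (fun a => (f a - mean ν f) ^ 2) ≤ mean ν (fun a => f a ^ 2) := by
  have hsq : ∀ a, (f a - mean ν f) ^ 2 = f a ^ 2 - 2 * mean ν f * f a + mean ν f ^ 2 :=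
    fun a => by ring
  simp only [hsq]
  rw [mean_add, mean_sub, mean_const_mul, mean_const hν]
  nlinarith [sq_nonneg (mean ν f)]

/-- The variance of the average of `card L` independent samples of `f` is at most
`E f² / card L`; the samples are indexed by `L` inside a larger independent family. -/
lemma mean_abs_sampleMean_sub_le [Nonempty L] {ν : A → ℝ} (hν : ν ∈ stdSimplex ℝ A)
    (e : L ↪ ι) (f : A → ℝ) :
    mean (iidLaw ι ν)
        (fun c => |mean (uniformLaw L) (fun l => f (c (e l))) - mean ν f|) ≤
      √(mean ν (fun a => f a ^ 2) / Fintype.card L) := by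
  set m := mean ν f
  have hiid : ∀ _ : ι, ν ∈ stdSimplex ℝ A := fun _ => hν
  have hcentered : mean ν (fun a => f a - m) = 0 := by
    rw [mean_sub, mean_const hν, sub_self]
  have horth : Pairwise fun l l' =>
      mean (iidLaw ι ν) (fun c => (f (c (e l)) - m) * (f (c (e l')) - m)) = 0 := fun l l' hl => by
    dsimp only
    rw [mean_prodLaw_apply_mul hiid (e.injective.ne hl) (fun a => f a - m) fun a => f a - m,
      hcentered, mul_zero]
  have hmean : ∀ c : ι → A, (mean (uniformLaw L) (fun l => f (c (e l))) - m) ^ 2 =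
      (Fintype.card L : ℝ)⁻¹ ^ 2 * (∑ l, (f (c (e l)) - m)) ^ 2 := fun c => by
    rw [← mean_const (uniformLaw_mem_stdSimplex L) m, ← mean_sub, mean_uniformLaw, mul_pow,
      mean_const (uniformLaw_mem_stdSimplex L)]
  refine (mean_abs_le_sqrt (iidLaw_mem_stdSimplex hν) _).trans (Real.sqrt_le_sqrt ?_)
  simp only [hmean]
  rw [mean_const_mul, mean_sq_sum_of_orthogonal horth]
  simp only [mean_prodLaw_apply hiid _ fun a => (f a - m) ^ 2]
  rw [sum_const, card_univ, nsmul_eq_mul]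
  calc (Fintype.card L : ℝ)⁻¹ ^ 2 * (Fintype.card L * mean ν (fun a => (f a - m) ^ 2))
      = mean ν (fun a => (f a - m) ^ 2) / Fintype.card L := by field_simp
    _ ≤ _ := by gcongr; exact mean_sq_sub_le hν f

end SampleMean

section LawOfLargeNumbers

variable {Ω : Type*} [Fintype Ω] {μ : Ω → ℝ}

lemma tendsto_prob_sum_lt (hμ : μ ∈ stdSimplex ℝ Ω) {f : Ω → ℝ} {c : ℝ} (hc : c < mean μ f) :
    Tendsto (fun n : ℕ => prob (iidLaw (Fin n) μ) {ω | ∑ i, f (ω i) < n * c}) atTop (𝓝 0) := by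
  set v := mean μ (fun ω => f ω ^ 2)
  set d := mean μ f - c
  have hd : 0 < d := sub_pos.mpr hc
  have hbound : ∀ᶠ n : ℕ in atTop,
      prob (iidLaw (Fin n) μ) {ω | ∑ i, f (ω i) < n * c} ≤ √(v / n) / d := by
    filter_upwards [eventually_gt_atTop 0] with n hn
    have : Nonempty (Fin n) := ⟨⟨0, hn⟩⟩
    have hiid := (iidLaw_mem_stdSimplex (ι := Fin n) hμ).1
    have hmean := mean_abs_sampleMean_sub_le (ι := Fin n) hμ (.refl _) f
    rw [Fintype.card_fin] at hmean
    refine (prob_mono hiid fun ω hω => ?_).trans <|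
      (prob_lt_le_mean_div hiid (fun _ => abs_nonneg _) hd).trans
        (div_le_div_of_nonneg_right hmean hd.le)
    have hlt : mean (uniformLaw (Fin n)) (fun i => f (ω i)) < c := by
      rw [mean_uniformLaw, Fintype.card_fin, inv_mul_lt_iff₀ (by positivity)]
      exact hω
    have hdlt : d < -(mean (uniformLaw (Fin n)) (fun i => f (ω i)) - mean μ f) := by
      rw [neg_sub]
      exact sub_lt_sub_left hlt _
    exact hdlt.trans_le (neg_le_abs _)
  have hlim : Tendsto (fun n : ℕ => √(v / n) / d) atTop (𝓝 0) := by
    simpa using ((tendsto_const_div_atTop_nhds_zero_nat v).sqrt).div_const d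
  exact squeeze_zero' (.of_forall fun n => prob_nonneg (iidLaw_mem_stdSimplex hμ).1 _) hbound hlim

/-- Concentration of the log-likelihood ratio of `a` and `b`; only the values where `μ` charges a
letter matter, because words with other letters have probability zero. -/
lemma tendsto_prob_prod_lt_mul_prod (hμ : μ ∈ stdSimplex ℝ Ω) {a b : Ω → ℝ}
    (ha : ∀ ω, 0 < μ ω → 0 < a ω) (hb : ∀ ω, 0 < μ ω → 0 < b ω) {c : ℝ}
    (hc : c < mean μ (fun ω => Real.logb 2 (a ω) - Real.logb 2 (b ω))) :
    Tendsto (fun n : ℕ => prob (iidLaw (Fin n) μ)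
      {ω | ∏ i, a (ω i) < (2 : ℝ) ^ (n * c) * ∏ i, b (ω i)}) atTop (𝓝 0) := by
  refine squeeze_zero (fun n => prob_nonneg (iidLaw_mem_stdSimplex hμ).1 _) (fun n => ?_)
    (tendsto_prob_sum_lt hμ hc)
  refine prob_mono_of_pos (iidLaw_mem_stdSimplex hμ).1 fun ω hpos hω => ?_
  have hμω : ∀ i, 0 < μ (ω i) := fun i =>
    (hμ.1 _).lt_of_ne' (prod_ne_zero_iff.mp hpos.ne' i (mem_univ i))
  have hA : 0 < ∏ i, a (ω i) := prod_pos fun i _ => ha _ (hμω i)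
  have hB : 0 < ∏ i, b (ω i) := prod_pos fun i _ => hb _ (hμω i)
  have hlog := Real.logb_lt_logb one_lt_two hA hω
  rw [Real.logb_mul (by positivity) hB.ne', Real.logb_rpow two_pos (by norm_num),
    Real.logb_prod _ _ fun i _ => (ha _ (hμω i)).ne',
    Real.logb_prod _ _ fun i _ => (hb _ (hμω i)).ne'] at hlog
  rw [Set.mem_ofPred_eq, sum_sub_distrib]
  linarith

end LawOfLargeNumbers

section Decoding

variable {ι Y : Type*}

/-- The decoder that outputs the unique index whose decision region contains the observation, and
rejects if there is no such index or more than one. -/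
def uniqueDecode (D : ι → Set Y) (y : Y) : Option ι :=
  if h : ∃! i, y ∈ D i then some h.choose else none

lemma uniqueDecode_eq_some_of_unique {D : ι → Set Y} {y : Y} {i : ι} (hi : y ∈ D i)
    (huniq : ∀ i' ≠ i, y ∉ D i') : uniqueDecode D y = some i := by
  have h : ∃! i, y ∈ D i := ⟨i, hi, fun i' hi' => by_contra fun hne => huniq i' hne hi'⟩
  rw [uniqueDecode, dif_pos h, h.unique h.choose_spec.1 hi]

lemma prob_uniqueDecode_ne_le [Fintype ι] [DecidableEq ι] [Fintype Y] {ν : Y → ℝ}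
    (hν : ∀ y, 0 ≤ ν y) (D : ι → Set Y) (i : ι) :
    prob ν {y | uniqueDecode D y ≠ some i} ≤
      prob ν (D i)ᶜ + ∑ i' ∈ univ.erase i, prob ν (D i') := by
  have hunion : ∀ s : Finset ι, prob ν (⋃ i' ∈ s, D i') ≤ ∑ i' ∈ s, prob ν (D i') := fun s => by
    induction s using Finset.induction_on with
    | empty => simp [prob, mean]
    | insert a s ha ih =>
      rw [set_biUnion_insert, sum_insert ha]
      exact (prob_union_le hν _ _).trans (by gcongr)
  refine (prob_mono hν fun y hy => ?_).trans
    ((prob_union_le hν _ _).trans (add_le_add_right (hunion _) _))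
  by_contra hnot
  simp only [Set.mem_union, Set.mem_compl_iff, not_or, not_not, Set.mem_iUnion, mem_erase,
    mem_univ, and_true, not_exists] at hnot
  exact hy (uniqueDecode_eq_some_of_unique hnot.1 hnot.2)

end Decoding

section Superposition

variable {A B I J Y : Type*}

/-- The codeword with index `(i, j)` in a superposition codebook: `(c i).1` is the `i`-th cloud
center and `(c i).2 j` the `j`-th satellite around it. -/
def codeword (c : I → A × (J → B)) (ij : I × J) : A × B := ((c ij.1).1, (c ij.1).2 ij.2)

/-- The decision region of the codeword `(i, j)`: the outputs `y` that together with this codeword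
form a pair in the typical set `T`. -/
def decisionRegion (T : Set ((A × B) × Y)) (c : I → A × (J → B)) (ij : I × J) : Set Y :=
  {y | (codeword c ij, y) ∈ T}

variable [Fintype A] [Fintype B] [Fintype I] [Fintype J]

/-- The law of a random superposition codebook: independent clouds, whose centers have law `p`, and
whose satellites are conditionally independent with law `P w` given the center `w`. -/
def superpositionLaw (I J : Type*) [Fintype I] [Fintype J] (p : A → ℝ) (P : A → B → ℝ) :
    (I → A × (J → B)) → ℝ :=
  iidLaw I (jointLaw p fun w => iidLaw J (P w))

variable [DecidableEq I] [DecidableEq J] {p : A → ℝ} {P : A → B → ℝ}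

lemma jointLaw_iidLaw_mem_stdSimplex (hp : p ∈ stdSimplex ℝ A) (hP : IsStochastic P) :
    jointLaw p (fun w => iidLaw J (P w)) ∈ stdSimplex ℝ (A × (J → B)) :=
  jointLaw_mem_stdSimplex hp hP.iidLaw

lemma superpositionLaw_mem_stdSimplex (hp : p ∈ stdSimplex ℝ A) (hP : IsStochastic P) :
    superpositionLaw I J p P ∈ stdSimplex ℝ (I → A × (J → B)) :=
  iidLaw_mem_stdSimplex (jointLaw_iidLaw_mem_stdSimplex hp hP)

lemma mean_jointLaw_iidLaw_apply (hP : IsStochastic P) (j : J) (h : A × B → ℝ) :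
    mean (jointLaw p fun w => iidLaw J (P w)) (fun a => h (a.1, a.2 j)) =
      mean (jointLaw p P) h := by
  rw [mean_jointLaw, mean_jointLaw]
  congr! 2 with w
  exact mean_prodLaw_apply (fun _ => hP.mem_stdSimplex w) j fun u => h (w, u)

lemma mean_superpositionLaw_cloud (hp : p ∈ stdSimplex ℝ A) (hP : IsStochastic P) (i : I)
    (h : A → (J → B) → ℝ) :
    mean (superpositionLaw I J p P) (fun c => h (c i).1 (c i).2) =
      mean p (fun w => mean (iidLaw J (P w)) (h w)) :=
  (mean_prodLaw_apply (fun _ => jointLaw_iidLaw_mem_stdSimplex hp hP) i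
    fun a => h a.1 a.2).trans (mean_jointLaw _ _ _)

lemma mean_superpositionLaw_codeword (hp : p ∈ stdSimplex ℝ A) (hP : IsStochastic P) (ij : I × J)
    (h : A × B → ℝ) :
    mean (superpositionLaw I J p P) (fun c => h (codeword c ij)) = mean (jointLaw p P) h :=
  (mean_prodLaw_apply (fun _ => jointLaw_iidLaw_mem_stdSimplex hp hP) ij.1
    fun a => h (a.1, a.2 ij.2)).trans (mean_jointLaw_iidLaw_apply hP ij.2 h)

lemma mean_superpositionLaw_codeword₂ (hp : p ∈ stdSimplex ℝ A) (hP : IsStochastic P)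
    {ij ij' : I × J} (hi : ij.1 ≠ ij'.1) (F : A × B → A × B → ℝ) :
    mean (superpositionLaw I J p P) (fun c => F (codeword c ij) (codeword c ij')) =
      mean (jointLaw p P) (fun a => mean (jointLaw p P) (F a)) := by
  have h := mean_prodLaw_apply₂ (fun _ => jointLaw_iidLaw_mem_stdSimplex (J := J) hp hP) hi
    fun a a' => F (a.1, a.2 ij.2) (a'.1, a'.2 ij'.2)
  simp only [mean_jointLaw_iidLaw_apply hP ij'.2 (F _)] at h
  exact h.trans (mean_jointLaw_iidLaw_apply hP ij.2 fun a => mean (jointLaw p P) (F a))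

lemma mean_superpositionLaw_codeword₂_same_cloud (hp : p ∈ stdSimplex ℝ A) (hP : IsStochastic P)
    (i : I) {j j' : J} (hj : j ≠ j') (F : A × B → A × B → ℝ) :
    mean (superpositionLaw I J p P) (fun c => F (codeword c (i, j)) (codeword c (i, j'))) =
      mean p (fun w => mean (P w) fun u => mean (P w) fun u' => F (w, u) (w, u')) := by
  refine (mean_superpositionLaw_cloud hp hP i fun w u => F (w, u j) (w, u j')).trans ?_
  congr! 2 with w
  exact mean_prodLaw_apply₂ (fun _ => hP.mem_stdSimplex w) hj fun u u' => F (w, u) (w, u')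

variable [Fintype Y] {G : A × B → Y → ℝ} {T : Set ((A × B) × Y)} {t₁ t₂ : ℝ}

lemma mean_prob_decisionRegion_compl (hp : p ∈ stdSimplex ℝ A) (hP : IsStochastic P)
    (ij : I × J) :
    mean (superpositionLaw I J p P)
        (fun c => prob (G (codeword c ij)) (decisionRegion T c ij)ᶜ) =
      prob (jointLaw (jointLaw p P) G) Tᶜ := by
  rw [prob_jointLaw]
  exact mean_superpositionLaw_codeword hp hP ij fun a => prob (G a) {y | (a, y) ∈ Tᶜ}

lemma mean_prob_decisionRegion_le_of_ne (hp : p ∈ stdSimplex ℝ A) (hP : IsStochastic P)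
    (hG : IsStochastic G) (ht : 0 < t₁)
    (hT : ∀ a y, (a, y) ∈ T → t₁ * outputLaw (jointLaw p P) G y ≤ G a y)
    {ij ij' : I × J} (hi : ij.1 ≠ ij'.1) :
    mean (superpositionLaw I J p P)
      (fun c => prob (G (codeword c ij)) (decisionRegion T c ij')) ≤ t₁⁻¹ := by
  have h := mean_superpositionLaw_codeword₂ hp hP hi fun a a' => prob (G a) {y | (a', y) ∈ T}
  refine h.le.trans ?_
  rw [mean_comm]
  refine mean_le_of_le (jointLaw_mem_stdSimplex hp hP) fun a' => ?_
  rw [← prob_outputLaw]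
  exact prob_le_inv_of_mul_le (hG.mem_stdSimplex a') ht fun y hy => hT a' y hy

lemma mean_prob_decisionRegion_le_of_same_cloud (hp : p ∈ stdSimplex ℝ A) (hP : IsStochastic P)
    (hG : IsStochastic G) (ht : 0 < t₂)
    (hT : ∀ w u y, ((w, u), y) ∈ T → t₂ * outputLaw (P w) (fun u => G (w, u)) y ≤ G (w, u) y)
    (i : I) {j j' : J} (hj : j ≠ j') :
    mean (superpositionLaw I J p P)
      (fun c => prob (G (codeword c (i, j))) (decisionRegion T c (i, j'))) ≤ t₂⁻¹ := by
  have h := mean_superpositionLaw_codeword₂_same_cloud hp hP i hj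
    fun a a' => prob (G a) {y | (a', y) ∈ T}
  refine h.le.trans (mean_le_of_le hp fun w => ?_)
  rw [mean_comm]
  refine mean_le_of_le (hP.mem_stdSimplex w) fun u' => ?_
  rw [← prob_outputLaw (P w) fun u => G (w, u)]
  exact prob_le_inv_of_mul_le (hG.mem_stdSimplex (w, u')) ht fun y hy => hT w u' y hy

/-- A competing codeword of another cloud is decoded with probability at most `t₁⁻¹`, one of the
same cloud with probability at most `t₂⁻¹`. -/
lemma mean_decodingError_le (hp : p ∈ stdSimplex ℝ A) (hP : IsStochastic P)
    (hG : IsStochastic G) (ht₁ : 0 < t₁) (ht₂ : 0 < t₂)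
    (hT₁ : ∀ a y, (a, y) ∈ T → t₁ * outputLaw (jointLaw p P) G y ≤ G a y)
    (hT₂ : ∀ w u y, ((w, u), y) ∈ T → t₂ * outputLaw (P w) (fun u => G (w, u)) y ≤ G (w, u) y)
    (ij : I × J) :
    mean (superpositionLaw I J p P) (fun c =>
        prob (G (codeword c ij)) {y | uniqueDecode (decisionRegion T c) y ≠ some ij}) ≤
      prob (jointLaw (jointLaw p P) G) Tᶜ +
        (Fintype.card I * Fintype.card J / t₁ + Fintype.card J / t₂) := by
  have hlaw := (superpositionLaw_mem_stdSimplex (I := I) (J := J) hp hP).1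
  have hwrong : ∀ b ∈ univ.erase ij,
      mean (superpositionLaw I J p P)
        (fun c => prob (G (codeword c ij)) (decisionRegion T c b)) ≤
      t₁⁻¹ + if b.1 = ij.1 then t₂⁻¹ else 0 := fun ⟨i', j'⟩ hb => by
    obtain ⟨i, j⟩ := ij
    rcases eq_or_ne i' i with rfl | hi
    · have hj : j ≠ j' := fun h => (mem_erase.mp hb).1 (by rw [h])
      rw [if_pos rfl]
      exact (mean_prob_decisionRegion_le_of_same_cloud hp hP hG ht₂ hT₂ i' hj).trans
        (le_add_of_nonneg_left (by positivity))
    · rw [if_neg hi, add_zero]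
      exact mean_prob_decisionRegion_le_of_ne hp hP hG ht₁ hT₁ hi.symm
  calc _ ≤ mean (superpositionLaw I J p P) (fun c =>
          prob (G (codeword c ij)) (decisionRegion T c ij)ᶜ +
            ∑ b ∈ univ.erase ij, prob (G (codeword c ij)) (decisionRegion T c b)) :=
        mean_mono hlaw fun c => prob_uniqueDecode_ne_le (hG.1 _) _ ij
    _ ≤ prob (jointLaw (jointLaw p P) G) Tᶜ +
          ∑ b ∈ univ.erase ij, (t₁⁻¹ + if b.1 = ij.1 then t₂⁻¹ else 0) := by
        rw [mean_add, mean_sum, mean_prob_decisionRegion_compl hp hP]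
        gcongr with b hb
        exact hwrong b hb
    _ ≤ prob (jointLaw (jointLaw p P) G) Tᶜ +
          ∑ b : I × J, (t₁⁻¹ + if b.1 = ij.1 then t₂⁻¹ else 0) := by
        gcongr
        exact erase_subset _ _
    _ = _ := by
        simp [sum_add_distrib, Fintype.sum_prod_type_right, div_eq_mul_inv, mul_assoc]

end Superposition

section SoftCovering

variable {ι L B Z : Type*} [Fintype Z]

/-- The total mass by which `μ` exceeds `ν`; for two probability laws this is their total variation
distance. -/
def excess (μ ν : Z → ℝ) : ℝ := ∑ z, max (μ z - ν z) 0

lemma excess_nonneg (μ ν : Z → ℝ) : 0 ≤ excess μ ν := sum_nonneg fun _ _ => le_max_right _ _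

lemma prob_le_prob_add_excess (μ ν : Z → ℝ) (S : Set Z) : prob μ S ≤ prob ν S + excess μ ν := by
  rw [prob, prob, mean, mean, excess, ← sum_add_distrib]
  refine sum_le_sum fun z _ => ?_
  by_cases hz : z ∈ S
  · simpa [hz] using sub_le_iff_le_add'.mp (le_max_left (μ z - ν z) 0)
  · simp [hz]

variable [Fintype ι] [DecidableEq ι] [Fintype L] [Nonempty L] [Fintype B] {ν : B → ℝ}

/-- On `R` the second moment of `f` is at most `s * (mean ν f) ^ 2`, so that part of the sample
mean concentrates; the part outside `R` is estimated by its own mean. -/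
lemma mean_posPart_sampleMean_sub_le (hν : ν ∈ stdSimplex ℝ B) (e : L ↪ ι) {f : B → ℝ}
    (hf : ∀ u, 0 ≤ f u) {R : Set B} {s : ℝ} (hs : 0 ≤ s) (hR : ∀ u ∈ R, f u ≤ s * mean ν f) :
    mean (iidLaw ι ν) (fun c => max (mean (uniformLaw L) (fun l => f (c (e l))) - mean ν f) 0) ≤
      √(s / Fintype.card L) * mean ν f + mean ν (Rᶜ.indicator f) := by
  have hmean : 0 ≤ mean ν f := mean_nonneg hν.1 hf
  have hcompl : ∀ u, 0 ≤ Rᶜ.indicator f u := Set.indicator_nonneg fun u _ => hf u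
  have hpoint : ∀ c : ι → B, max (mean (uniformLaw L) (fun l => f (c (e l))) - mean ν f) 0 ≤
      |mean (uniformLaw L) (fun l => R.indicator f (c (e l))) - mean ν (R.indicator f)| +
        mean (uniformLaw L) (fun l => Rᶜ.indicator f (c (e l))) := fun c => by
    have hsample := mean_nonneg (uniformLaw_mem_stdSimplex L).1 fun l => hcompl (c (e l))
    have hsplit : ∀ u, f u = R.indicator f u + Rᶜ.indicator f u := fun u =>
      (Set.indicator_self_add_compl_apply R f u).symm
    have hmean_split : mean ν f = mean ν (R.indicator f) + mean ν (Rᶜ.indicator f) := by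
      rw [← mean_add, ← funext hsplit]
    refine max_le ?_ (by positivity)
    rw [hmean_split, funext fun l => hsplit (c (e l)), mean_add]
    linarith [mean_nonneg hν.1 hcompl, le_abs_self
      (mean (uniformLaw L) (fun l => R.indicator f (c (e l))) - mean ν (R.indicator f))]
  have hsq : mean ν (fun u => R.indicator f u ^ 2) ≤ s * mean ν f * mean ν f := by
    rw [← mean_const_mul]
    refine mean_mono hν.1 fun u => ?_
    by_cases hu : u ∈ R
    · simpa [hu, sq] using mul_le_mul_of_nonneg_right (hR u hu) (hf u)
    · simpa [hu] using mul_nonneg (mul_nonneg hs hmean) (hf u)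
  have htypical : √(mean ν (fun u => R.indicator f u ^ 2) / Fintype.card L) ≤
      √(s / Fintype.card L) * mean ν f := by
    refine Real.sqrt_le_iff.mpr ⟨by positivity, ?_⟩
    rw [mul_pow, Real.sq_sqrt (by positivity), div_mul_eq_mul_div, sq, ← mul_assoc]
    gcongr
  refine (mean_mono (iidLaw_mem_stdSimplex hν).1 hpoint).trans ?_
  rw [mean_add, mean_comm (iidLaw ι ν)]
  simp only [mean_prodLaw_apply (fun _ : ι => hν), mean_const (uniformLaw_mem_stdSimplex L)]
  gcongr
  exact (mean_abs_sampleMean_sub_le hν e _).trans htypical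

/-- Soft covering: feeding a channel with a uniformly chosen one of `card L` random codewords
simulates its output law, as soon as `card L` exceeds the typical likelihood ratio `s`. -/
lemma mean_excess_outputLaw_le (hν : ν ∈ stdSimplex ℝ B) {H : B → Z → ℝ} (hH : IsStochastic H)
    {S : Set (B × Z)} {s : ℝ} (hs : 0 ≤ s)
    (hS : ∀ u z, (u, z) ∈ S → H u z ≤ s * outputLaw ν H z) (e : L ↪ ι) :
    mean (iidLaw ι ν) (fun c =>
        excess (outputLaw (uniformLaw L) fun l => H (c (e l))) (outputLaw ν H)) ≤
      √(s / Fintype.card L) + prob (jointLaw ν H) Sᶜ := by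
  have hatypical : ∑ z, mean ν ({u | (u, z) ∈ S}ᶜ.indicator fun u => H u z) =
      prob (jointLaw ν H) Sᶜ := by
    rw [prob_jointLaw, ← mean_sum]
    congr! 2 with u
    exact sum_congr rfl fun z _ => by by_cases h : (u, z) ∈ S <;> simp [h]
  calc mean (iidLaw ι ν) (fun c =>
          excess (outputLaw (uniformLaw L) fun l => H (c (e l))) (outputLaw ν H))
      = ∑ z, mean (iidLaw ι ν) (fun c => max
          (mean (uniformLaw L) (fun l => H (c (e l)) z) - mean ν fun u => H u z) 0) :=
        mean_sum _ _ _
    _ ≤ ∑ z, (√(s / Fintype.card L) * outputLaw ν H z +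
          mean ν ({u | (u, z) ∈ S}ᶜ.indicator fun u => H u z)) :=
        sum_le_sum fun z _ =>
          mean_posPart_sampleMean_sub_le hν e (fun u => hH.1 u z) hs fun u hu => hS u z hu
    _ = √(s / Fintype.card L) + prob (jointLaw ν H) Sᶜ := by
        rw [sum_add_distrib, ← mul_sum, (outputLaw_mem_stdSimplex hν hH).2, mul_one, hatypical]

end SoftCovering

section Leakage

variable {A B I L K Z : Type*} [Fintype B] [Fintype L] [Fintype Z]

/-- How far, given the cloud `i` and the key `k`, the observation of the adversary is from being
distributed as if the satellite codeword were drawn from `P` instead of the codebook. -/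
def leakage (P : A → B → ℝ) (H : A × B → Z → ℝ) (c : I → A × (L × K → B)) (ik : I × K) : ℝ :=
  excess (outputLaw (uniformLaw L) fun l => H (codeword c (ik.1, l, ik.2)))
    (outputLaw (P (c ik.1).1) fun u => H ((c ik.1).1, u))

lemma mean_leakage_le [Fintype A] [Fintype I] [DecidableEq I] [DecidableEq L] [Nonempty L]
    [Fintype K] [DecidableEq K] {p : A → ℝ} (hp : p ∈ stdSimplex ℝ A)
    {P : A → B → ℝ} (hP : IsStochastic P) {H : A × B → Z → ℝ} (hH : IsStochastic H)
    {S : Set ((A × B) × Z)} {s : ℝ} (hs : 0 ≤ s)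
    (hS : ∀ w u z, ((w, u), z) ∈ S → H (w, u) z ≤ s * outputLaw (P w) (fun u => H (w, u)) z)
    (ik : I × K) :
    mean (superpositionLaw I (L × K) p P) (fun c => leakage P H c ik) ≤
      √(s / Fintype.card L) + prob (jointLaw (jointLaw p P) H) Sᶜ := by
  obtain ⟨i, k⟩ := ik
  calc _ = mean p (fun w => mean (iidLaw (L × K) (P w)) fun u =>
          excess (outputLaw (uniformLaw L) fun l => H (w, u (l, k)))
            (outputLaw (P w) fun u => H (w, u))) :=
        mean_superpositionLaw_cloud hp hP i fun w u =>
          excess (outputLaw (uniformLaw L) fun l => H (w, u (l, k)))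
            (outputLaw (P w) fun u => H (w, u))
    _ ≤ mean p (fun w => √(s / Fintype.card L) +
          prob (jointLaw (P w) fun u => H (w, u)) {uz | ((w, uz.1), uz.2) ∈ Sᶜ}) :=
        mean_mono hp.1 fun w =>
          mean_excess_outputLaw_le (S := {uz | ((w, uz.1), uz.2) ∈ S}) (hP.mem_stdSimplex w)
            ⟨fun u => hH.1 (w, u), fun u => hH.2 (w, u)⟩ hs (hS w) (.sectL L k)
    _ = √(s / Fintype.card L) + prob (jointLaw (jointLaw p P) H) Sᶜ := by
        simp only [mean_add, mean_const hp, prob_jointLaw, mean_jointLaw, Set.mem_ofPred_eq]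

end Leakage

section AuthenticationCode

variable {M K M' K' : Type*} [Fintype M'] [Fintype M]

/-- The probability `ω_{f,φ}(z,m,k)` that the attack `ψ`, observing `z`, makes the decoder accept a
message other than `m`. -/
def forgeryProb {Y Z : Type*} [Fintype Y] (ψ : Z → Y → ℝ) (φ : Y × K → Option M → ℝ) (z : Z)
    (m : M) (k : K) : ℝ :=
  mean (ψ z) fun y => ∑ m' ∈ univ.erase m, φ (y, k) (some m')

lemma forgeryProb_reindex {Y Z : Type*} [Fintype Y] (eM : M' ≃ M) (eK : K' ≃ K) (ψ : Z → Y → ℝ)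
    (φ : Y × K → Option M → ℝ) (z : Z) (m : M') (k : K') :
    forgeryProb ψ (fun yk m => φ (yk.1, eK yk.2) (m.map eM)) z m k =
      forgeryProb ψ φ z (eM m) (eK k) := by
  unfold forgeryProb
  congr! 2 with y
  exact sum_equiv eM (by simp) fun _ _ => rfl

variable [Fintype K] [Fintype K'] {Wc : 𝒳 → 𝒴 → ℝ} {Vc : 𝒳 → 𝒵 → ℝ} {r α κ δ : ℝ} {n : ℕ}

lemma sum_pOut_mul {𝒪 : Type*} [Fintype 𝒪] (Ch : 𝒳 → 𝒪 → ℝ) (f : M × K → (Fin n → 𝒳) → ℝ)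
    (g : (Fin n → 𝒪) → M → K → ℝ) :
    ∑ o, ∑ m, ∑ k, pOut Ch n f o m k * g o m k =
      mean (uniformLaw (M × K)) fun mk =>
        mean (outputLaw (f mk) (memExt Ch n)) fun o => g o mk.1 mk.2 := by
  have hpOut : ∀ o m k, pOut Ch n f o m k =
      uniformLaw (M × K) (m, k) * outputLaw (f (m, k)) (memExt Ch n) o := fun o m k => by
    simp only [pOut, uniformLaw, outputLaw, Fintype.card_prod, Nat.cast_mul, mul_inv, mul_sum,
      mul_assoc]
  simp only [mean, Fintype.sum_prod_type, hpOut, mul_sum, mul_assoc]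
  rw [sum_comm]
  exact sum_congr rfl fun _ _ => sum_comm

lemma isTACode_iff {f : M × K → (Fin n → 𝒳) → ℝ} {φ : (Fin n → 𝒴) × K → Option M → ℝ} :
    IsTACode Wc Vc r α κ δ n f φ ↔
      IsStochastic f ∧ IsStochastic φ ∧ r ≤ Real.logb 2 (Fintype.card M) / n ∧
      Real.logb 2 (Fintype.card K) / n ≤ κ ∧
      1 - mean (uniformLaw (M × K)) (fun mk =>
        mean (outputLaw (f mk) (memExt Wc n)) fun y => φ (y, mk.2) (some mk.1)) ≤ δ ∧
      ∀ ψ, IsStochastic ψ → mean (uniformLaw (M × K)) (fun mk =>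
        prob (outputLaw (f mk) (memExt Vc n))
          {z | (2 : ℝ) ^ (-(n : ℝ) * α) < forgeryProb ψ φ z mk.1 mk.2}) ≤ δ := by
  have hattack : ∀ ψ : (Fin n → 𝒵) → (Fin n → 𝒴) → ℝ,
      ∑ z, ∑ m, ∑ k, (if (2 : ℝ) ^ (-(n : ℝ) * α) <
          ∑ y, ψ z y * ∑ m' ∈ univ.erase m, φ (y, k) (some m') then pOut Vc n f z m k else 0) =
        mean (uniformLaw (M × K)) (fun mk => prob (outputLaw (f mk) (memExt Vc n))
          {z | (2 : ℝ) ^ (-(n : ℝ) * α) < forgeryProb ψ φ z mk.1 mk.2}) := fun ψ => by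
    simp only [prob]
    rw [← sum_pOut_mul Vc f fun z m k =>
      {z | (2 : ℝ) ^ (-(n : ℝ) * α) < forgeryProb ψ φ z m k}.indicator 1 z]
    simp [Set.indicator_apply, forgeryProb, mean]
  simp only [IsTACode, sum_pOut_mul, hattack]

lemma mean_uniformLaw_comp_equiv {Ω Ω' : Type*} [Fintype Ω] [Fintype Ω'] (e : Ω' ≃ Ω) (f : Ω → ℝ) :
    mean (uniformLaw Ω') (fun ω => f (e ω)) = mean (uniformLaw Ω) f := by
  rw [mean_uniformLaw, mean_uniformLaw, Fintype.card_congr e, e.sum_comp f]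

lemma IsTACode.reindex (eM : M' ≃ M) (eK : K' ≃ K) {f : M × K → (Fin n → 𝒳) → ℝ}
    {φ : (Fin n → 𝒴) × K → Option M → ℝ} (h : IsTACode Wc Vc r α κ δ n f φ) :
    IsTACode Wc Vc r α κ δ n (fun mk => f (eM mk.1, eK mk.2))
      (fun yk m => φ (yk.1, eK yk.2) (m.map eM)) := by
  obtain ⟨hf, hφ, hr, hκ, herr, hatt⟩ := isTACode_iff.mp h
  refine isTACode_iff.mpr ⟨⟨fun _ => hf.1 _, fun _ => hf.2 _⟩, ⟨fun _ _ => hφ.1 _ _, fun yk => ?_⟩,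
    by rwa [Fintype.card_congr eM], by rwa [Fintype.card_congr eK], ?_, fun ψ hψ => ?_⟩
  · rw [← hφ.2 (yk.1, eK yk.2)]
    exact eM.optionCongr.sum_comp (φ (yk.1, eK yk.2))
  · refine le_trans (le_of_eq ?_) herr
    exact congrArg (1 - ·) (mean_uniformLaw_comp_equiv (eM.prodCongr eK) fun mk =>
      mean (outputLaw (f mk) (memExt Wc n)) fun y => φ (y, mk.2) (some mk.1))
  · simp only [forgeryProb_reindex]
    refine (mean_uniformLaw_comp_equiv (eM.prodCongr eK) fun mk =>
      prob (outputLaw (f mk) (memExt Vc n))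
        {z | (2 : ℝ) ^ (-(n : ℝ) * α) < forgeryProb ψ φ z mk.1 mk.2}).trans_le (hatt ψ hψ)

lemma IsTACode.mono (hVc : IsStochastic Vc) {α' δ' : ℝ} (hα : α' ≤ α) (hδ : δ ≤ δ')
    {f : M × K → (Fin n → 𝒳) → ℝ} {φ : (Fin n → 𝒴) × K → Option M → ℝ}
    (h : IsTACode Wc Vc r α κ δ n f φ) : IsTACode Wc Vc r α' κ δ' n f φ := by
  obtain ⟨hf, hφ, hr, hκ, herr, hatt⟩ := isTACode_iff.mp h
  refine isTACode_iff.mpr ⟨hf, hφ, hr, hκ, herr.trans hδ, fun ψ hψ =>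
    (mean_mono ?_ fun mk => prob_mono ?_ fun z hz => ?_).trans ((hatt ψ hψ).trans hδ)⟩
  · exact fun _ => inv_nonneg.mpr (Nat.cast_nonneg _)
  · exact (outputLaw_mem_stdSimplex (hf.mem_stdSimplex mk) (hVc.memExt n)).1
  · refine lt_of_le_of_lt (Real.rpow_le_rpow_of_exponent_le one_le_two ?_) hz
    exact mul_le_mul_of_nonpos_left hα (neg_nonpos.mpr n.cast_nonneg)

/-- Existence of an `(r, α, κ, δ, n)`-TA code. -/
def HasTACode (Wc : 𝒳 → 𝒴 → ℝ) (Vc : 𝒳 → 𝒵 → ℝ) (r α κ δ : ℝ) (n : ℕ) : Prop :=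
  ∃ (Mc Kc : ℕ) (f : Fin Mc × Fin Kc → (Fin n → 𝒳) → ℝ)
    (φ : (Fin n → 𝒴) × Fin Kc → Option (Fin Mc) → ℝ), IsTACode Wc Vc r α κ δ n f φ

lemma IsTACode.hasTACode {f : M × K → (Fin n → 𝒳) → ℝ} {φ : (Fin n → 𝒴) × K → Option M → ℝ}
    (h : IsTACode Wc Vc r α κ δ n f φ) : HasTACode Wc Vc r α κ δ n :=
  ⟨_, _, _, _, h.reindex (Fintype.equivFin M).symm (Fintype.equivFin K).symm⟩

lemma HasTACode.mono (hVc : IsStochastic Vc) {α' δ' : ℝ} (hα : α' ≤ α) (hδ : δ ≤ δ')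
    (h : HasTACode Wc Vc r α κ δ n) : HasTACode Wc Vc r α' κ δ' n :=
  let ⟨_, _, _, _, h⟩ := h
  ⟨_, _, _, _, h.mono hVc hα hδ⟩

end AuthenticationCode

section KeyedDecoding

variable {I L K Y Z : Type*}

/-- The receiver's decoder: it decodes a codeword `(i, l, k')` and accepts the message `(i, l)` if
`k'` is the shared key. -/
def keyedDecode (D : I × L × K → Set Y) (yk : Y × K) : Option (I × L) :=
  (uniqueDecode D yk.1).bind fun x => if x.2.2 = yk.2 then some (x.1, x.2.1) else none

lemma keyedDecode_eq_some_of_uniqueDecode {D : I × L × K → Set Y} {y : Y} {i : I} {l : L} {k : K}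
    (h : uniqueDecode D y = some (i, l, k)) : keyedDecode D (y, k) = some (i, l) := by
  simp [keyedDecode, h]

lemma map_key_uniqueDecode_of_keyedDecode {D : I × L × K → Set Y} {y : Y} {k : K} {m : I × L}
    (h : keyedDecode D (y, k) = some m) :
    (uniqueDecode D y).map (fun x => x.2.2) = some k := by
  obtain ⟨x, hx, hm⟩ := Option.bind_eq_some_iff.mp h
  rw [hx, Option.map_some, (Option.ite_none_right_eq_some.mp hm).1]

/-- The deterministic decoder `keyedDecode D` as a stochastic map. -/
def keyedDecoder (D : I × L × K → Set Y) (yk : Y × K) : Option (I × L) → ℝ :=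
  Pi.single (keyedDecode D yk) 1

variable [Fintype I] [Fintype L]

lemma isStochastic_keyedDecoder (D : I × L × K → Set Y) : IsStochastic (keyedDecoder D) :=
  isStochastic_of_mem_stdSimplex fun yk => single_mem_stdSimplex ℝ (keyedDecode D yk)

variable [Fintype Y]

lemma forgeryProb_keyedDecoder_le {ψ : Z → Y → ℝ} (hψ : IsStochastic ψ) (D : I × L × K → Set Y)
    (z : Z) (m : I × L) (k : K) :
    forgeryProb ψ (keyedDecoder D) z m k ≤
      prob (ψ z) {y | (uniqueDecode D y).map (fun x => x.2.2) = some k} := by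
  refine mean_mono (hψ.1 z) fun y => ?_
  rcases h : keyedDecode D (y, k) with _ | m₀
  · simp only [keyedDecoder, h, Pi.single_apply, reduceCtorEq, if_false, sum_const_zero]
    exact Set.indicator_nonneg (fun _ _ => zero_le_one) y
  · have hkey : y ∈ {y | (uniqueDecode D y).map (fun x => x.2.2) = some k} :=
      map_key_uniqueDecode_of_keyedDecode h
    simp only [keyedDecoder, h, Set.indicator_of_mem hkey, Pi.single_apply,
      Option.some_inj, sum_ite_eq', Pi.one_apply]
    split_ifs <;> norm_num

variable [Fintype K]

lemma sum_prob_eq_some_le_one {ν : Y → ℝ} (hν : ν ∈ stdSimplex ℝ Y) (g : Y → Option K) :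
    ∑ k, prob ν {y | g y = some k} ≤ 1 := by
  simp only [prob]
  rw [← mean_sum]
  refine mean_le_of_le hν fun y => ?_
  rcases h : g y with _ | k <;> simp [Set.indicator_apply, h]

/-- Every `z` can be charged with at most `t⁻¹` keys whose guess succeeds with probability above
`t`. -/
lemma mean_prob_keyGuess_le [Nonempty K] [Fintype Z] {ψ : Z → Y → ℝ} (hψ : IsStochastic ψ)
    (g : Y → Option K) {N : K → Z → ℝ} {Q : Z → ℝ} (hQ : Q ∈ stdSimplex ℝ Z) {t : ℝ} (ht : 0 < t) :
    mean (uniformLaw K) (fun k => prob (N k) {z | t < prob (ψ z) {y | g y = some k}}) ≤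
      (Fintype.card K * t)⁻¹ + mean (uniformLaw K) (fun k => excess (N k) Q) := by
  have hK := (uniformLaw_mem_stdSimplex K).1
  have hmarkov : ∀ z, prob (uniformLaw K) {k | t < prob (ψ z) {y | g y = some k}} ≤
      (Fintype.card K * t)⁻¹ := fun z => by
    refine (prob_lt_le_mean_div hK (fun k => prob_nonneg (hψ.1 z) _) ht).trans ?_
    rw [mean_uniformLaw, mul_inv, div_eq_mul_inv]
    gcongr
    exact mul_le_of_le_one_right (by positivity)
      (sum_prob_eq_some_le_one (hψ.mem_stdSimplex z) g)
  calc _ ≤ mean (uniformLaw K) (fun k => prob Q {z | t < prob (ψ z) {y | g y = some k}} +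
          excess (N k) Q) := mean_mono hK fun k => prob_le_prob_add_excess _ _ _
    _ = mean Q (fun z => prob (uniformLaw K) {k | t < prob (ψ z) {y | g y = some k}}) +
          mean (uniformLaw K) (fun k => excess (N k) Q) := by
        rw [mean_add]
        congr 1
        exact mean_comm _ _ _
    _ ≤ _ := by
        gcongr
        exact mean_le_of_le hQ hmarkov

end KeyedDecoding

section OneShotCode

lemma mean_uniformLaw_prod {A B : Type*} [Fintype A] [Fintype B] (f : A × B → ℝ) :
    mean (uniformLaw (A × B)) f =
      mean (uniformLaw A) fun a => mean (uniformLaw B) fun b => f (a, b) := by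
  simp only [mean_uniformLaw, Fintype.card_prod, Fintype.sum_prod_type, ← mul_sum, Nat.cast_mul,
    mul_inv, mul_assoc]

variable {A B I L K : Type*} [Fintype I] [Fintype L] [Fintype K]
  {Wc : 𝒳 → 𝒴 → ℝ} {Vc : 𝒳 → 𝒵 → ℝ} {n : ℕ}

/-- The average over messages and keys of the probability that the receiver does not decode the
transmitted codeword. -/
def decodingError {Y : Type*} [Fintype Y] (G : A × B → Y → ℝ) (T : Set ((A × B) × Y))
    (c : I → A × (L × K → B)) : ℝ :=
  mean (uniformLaw (I × L × K)) fun x =>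
    prob (G (codeword c x)) {y | uniqueDecode (decisionRegion T c) y ≠ some x}

lemma one_sub_mean_keyedDecoder_le [Nonempty I] [Nonempty L] [Nonempty K] {Y : Type*} [Fintype Y]
    {G : A × B → Y → ℝ} (hG : IsStochastic G) (T : Set ((A × B) × Y)) (c : I → A × (L × K → B)) :
    1 - mean (uniformLaw ((I × L) × K)) (fun mk => mean (G (codeword c (mk.1.1, mk.1.2, mk.2)))
        fun y => keyedDecoder (decisionRegion T c) (y, mk.2) (some mk.1)) ≤
      decodingError G T c := by
  have hlaw := uniformLaw_mem_stdSimplex ((I × L) × K)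
  rw [decodingError, ← mean_uniformLaw_comp_equiv (Equiv.prodAssoc I L K)]
  nth_rw 1 [← mean_const hlaw 1]
  rw [← mean_sub]
  refine mean_mono hlaw.1 fun ⟨⟨i, l⟩, k⟩ => ?_
  rw [sub_le_comm, Equiv.prodAssoc_apply, ← prob_compl (hG.mem_stdSimplex _)]
  refine mean_mono (hG.1 _) fun y => ?_
  by_cases h : uniqueDecode (decisionRegion T c) y = some (i, l, k)
  · simp [h, keyedDecoder, keyedDecode_eq_some_of_uniqueDecode h]
  · simpa [h] using (isStochastic_keyedDecoder (decisionRegion T c)).1 (y, k) (some (i, l))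

lemma decodingError_nonneg {Y : Type*} [Fintype Y] {G : A × B → Y → ℝ} (hG : IsStochastic G)
    (T : Set ((A × B) × Y)) (c : I → A × (L × K → B)) : 0 ≤ decodingError G T c :=
  mean_nonneg (fun _ => inv_nonneg.mpr (Nat.cast_nonneg _)) fun _ => prob_nonneg (hG.1 _) _

variable [Fintype B]

lemma mean_prob_forgery_le [Nonempty L] [Nonempty K] {Y Z : Type*} [Fintype Y]
    [Fintype Z] {P : A → B → ℝ} (hP : IsStochastic P) {H : A × B → Z → ℝ} (hH : IsStochastic H)
    {ψ : Z → Y → ℝ} (hψ : IsStochastic ψ) (D : I × L × K → Set Y) (c : I → A × (L × K → B))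
    [Nonempty I] {t : ℝ} (ht : 0 < t) :
    mean (uniformLaw ((I × L) × K)) (fun mk => prob (H (codeword c (mk.1.1, mk.1.2, mk.2)))
        {z | t < forgeryProb ψ (keyedDecoder D) z mk.1 mk.2}) ≤
      (Fintype.card K * t)⁻¹ + mean (uniformLaw (I × K)) (leakage P H c) := by
  let guess (y : Y) : Option K := (uniqueDecode D y).map fun x => x.2.2
  let success (k : K) : Set Z := {z | t < prob (ψ z) {y | guess y = some k}}
  let observation (i : I) (k : K) : Z → ℝ :=
    outputLaw (uniformLaw L) fun l => H (codeword c (i, l, k))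
  have hideal : ∀ i, outputLaw (P (c i).1) (fun u => H ((c i).1, u)) ∈ stdSimplex ℝ Z := fun i =>
    outputLaw_mem_stdSimplex (hP.mem_stdSimplex _)
      ⟨fun u => hH.1 ((c i).1, u), fun u => hH.2 ((c i).1, u)⟩
  calc _ ≤ mean (uniformLaw ((I × L) × K)) (fun mk =>
          prob (H (codeword c (mk.1.1, mk.1.2, mk.2))) (success mk.2)) :=
        mean_mono (uniformLaw_mem_stdSimplex _).1 fun mk => prob_mono (hH.1 _) fun z hz =>
          lt_of_lt_of_le hz (forgeryProb_keyedDecoder_le hψ D z mk.1 mk.2)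
    _ = mean (uniformLaw I) (fun i => mean (uniformLaw K) fun k =>
          prob (observation i k) (success k)) := by
        simp only [mean_uniformLaw_prod, observation, prob_outputLaw]
        congr! 2 with i
        exact mean_comm _ _ _
    _ ≤ mean (uniformLaw I) (fun i => (Fintype.card K * t)⁻¹ +
          mean (uniformLaw K) fun k => leakage P H c (i, k)) :=
        mean_mono (uniformLaw_mem_stdSimplex _).1 fun i =>
          mean_prob_keyGuess_le hψ guess (N := observation i) (hideal i) ht
    _ = _ := by
        rw [mean_add, mean_const (uniformLaw_mem_stdSimplex I), mean_uniformLaw_prod]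

lemma superposition_isTACode [Nonempty I] [Nonempty L] [Nonempty K]
    (hWc : IsStochastic Wc) (hVc : IsStochastic Vc) {P : A → B → ℝ} (hP : IsStochastic P)
    {R : A × B → (Fin n → 𝒳) → ℝ} (hR : IsStochastic R)
    (T : Set ((A × B) × (Fin n → 𝒴))) (c : I → A × (L × K → B)) {r α κ δ : ℝ}
    (hr : r ≤ Real.logb 2 (Fintype.card (I × L)) / n)
    (hκ : Real.logb 2 (Fintype.card K) / n ≤ κ)
    (herr : decodingError (fun a => outputLaw (R a) (memExt Wc n)) T c ≤ δ)
    (hatt : (Fintype.card K * (2 : ℝ) ^ (-(n : ℝ) * α))⁻¹ + mean (uniformLaw (I × K))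
      (leakage P (fun a => outputLaw (R a) (memExt Vc n)) c) ≤ δ) :
    IsTACode Wc Vc r α κ δ n (fun mk : (I × L) × K => R (codeword c (mk.1.1, mk.1.2, mk.2)))
      (keyedDecoder (decisionRegion T c)) := by
  refine isTACode_iff.mpr ⟨⟨fun _ => hR.1 _, fun _ => hR.2 _⟩, isStochastic_keyedDecoder _, hr, hκ,
    (one_sub_mean_keyedDecoder_le (hR.comp (hWc.memExt n)) T c).trans herr, fun ψ hψ =>
      (mean_prob_forgery_le hP (hR.comp (hVc.memExt n)) hψ _ c (by positivity)).trans hatt⟩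

lemma mean_leakage_nonneg {Z : Type*} [Fintype Z] (P : A → B → ℝ) (H : A × B → Z → ℝ)
    (c : I → A × (L × K → B)) : 0 ≤ mean (uniformLaw (I × K)) (leakage P H c) :=
  mean_nonneg (fun _ => inv_nonneg.mpr (Nat.cast_nonneg _)) fun _ => excess_nonneg _ _

/-- Random coding: some superposition codebook is at least as good as the average, for the decoding
error and the leakage simultaneously. -/
lemma exists_superposition_le [Fintype A] [Nonempty I] [Nonempty L] [Nonempty K]
    {Y Z : Type*} [Fintype Y] [Fintype Z] {p : A → ℝ} (hp : p ∈ stdSimplex ℝ A) {P : A → B → ℝ}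
    (hP : IsStochastic P) {G : A × B → Y → ℝ} (hG : IsStochastic G) {H : A × B → Z → ℝ}
    (hH : IsStochastic H) {T : Set ((A × B) × Y)} {S : Set ((A × B) × Z)} {t₁ t₂ s : ℝ}
    (ht₁ : 0 < t₁) (ht₂ : 0 < t₂) (hs : 0 ≤ s)
    (hT₁ : ∀ a y, (a, y) ∈ T → t₁ * outputLaw (jointLaw p P) G y ≤ G a y)
    (hT₂ : ∀ w u y, ((w, u), y) ∈ T → t₂ * outputLaw (P w) (fun u => G (w, u)) y ≤ G (w, u) y)
    (hS : ∀ w u z, ((w, u), z) ∈ S → H (w, u) z ≤ s * outputLaw (P w) (fun u => H (w, u)) z) :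
    ∃ c : I → A × (L × K → B), decodingError G T c + mean (uniformLaw (I × K)) (leakage P H c) ≤
      prob (jointLaw (jointLaw p P) G) Tᶜ +
        (Fintype.card I * Fintype.card (L × K) / t₁ + Fintype.card (L × K) / t₂) +
      (√(s / Fintype.card L) + prob (jointLaw (jointLaw p P) H) Sᶜ) := by
  let law := superpositionLaw I (L × K) p P
  have herror : mean law (decodingError G T) ≤ prob (jointLaw (jointLaw p P) G) Tᶜ +
      (Fintype.card I * Fintype.card (L × K) / t₁ + Fintype.card (L × K) / t₂) :=
    (mean_comm law (uniformLaw (I × L × K)) _).trans_le <|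
      mean_le_of_le (uniformLaw_mem_stdSimplex _)
        fun x => mean_decodingError_le hp hP hG ht₁ ht₂ hT₁ hT₂ x
  have hleakage : mean law (fun c => mean (uniformLaw (I × K)) (leakage P H c)) ≤
      √(s / Fintype.card L) + prob (jointLaw (jointLaw p P) H) Sᶜ :=
    (mean_comm law (uniformLaw (I × K)) _).trans_le <|
      mean_le_of_le (uniformLaw_mem_stdSimplex _) fun ik => mean_leakage_le hp hP hH hs hS ik
  refine exists_le_of_mean_le (superpositionLaw_mem_stdSimplex hp hP) ?_
  rw [mean_add]
  exact add_le_add herror hleakage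

lemma hasTACode_of_typicalSets [Fintype A] [Nonempty I] [Nonempty L] [Nonempty K]
    (hWc : IsStochastic Wc) (hVc : IsStochastic Vc) {p : A → ℝ} (hp : p ∈ stdSimplex ℝ A)
    {P : A → B → ℝ} (hP : IsStochastic P) {R : A × B → (Fin n → 𝒳) → ℝ} (hR : IsStochastic R)
    {G : A × B → (Fin n → 𝒴) → ℝ} (hG : G = fun a => outputLaw (R a) (memExt Wc n))
    {H : A × B → (Fin n → 𝒵) → ℝ} (hH : H = fun a => outputLaw (R a) (memExt Vc n))
    {T : Set ((A × B) × (Fin n → 𝒴))} {S : Set ((A × B) × (Fin n → 𝒵))} {t₁ t₂ s : ℝ}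
    (ht₁ : 0 < t₁) (ht₂ : 0 < t₂) (hs : 0 ≤ s)
    (hT₁ : ∀ a y, (a, y) ∈ T → t₁ * outputLaw (jointLaw p P) G y ≤ G a y)
    (hT₂ : ∀ w u y, ((w, u), y) ∈ T → t₂ * outputLaw (P w) (fun u => G (w, u)) y ≤ G (w, u) y)
    (hS : ∀ w u z, ((w, u), z) ∈ S → H (w, u) z ≤ s * outputLaw (P w) (fun u => H (w, u)) z)
    {r α κ δ : ℝ} (hr : r ≤ Real.logb 2 (Fintype.card (I × L)) / n)
    (hκ : Real.logb 2 (Fintype.card K) / n ≤ κ)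
    (hδ : prob (jointLaw (jointLaw p P) G) Tᶜ +
        (Fintype.card I * Fintype.card (L × K) / t₁ + Fintype.card (L × K) / t₂) +
      (√(s / Fintype.card L) + prob (jointLaw (jointLaw p P) H) Sᶜ) +
      (Fintype.card K * (2 : ℝ) ^ (-(n : ℝ) * α))⁻¹ ≤ δ) :
    HasTACode Wc Vc r α κ δ n := by
  have hGstoch : IsStochastic G := hG ▸ hR.comp (hWc.memExt n)
  have hHstoch : IsStochastic H := hH ▸ hR.comp (hVc.memExt n)
  obtain ⟨c, hc⟩ := exists_superposition_le (I := I) (L := L) (K := K) hp hP hGstoch hHstoch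
    ht₁ ht₂ hs hT₁ hT₂ hS
  have herror := decodingError_nonneg hGstoch T c
  have hleakage := mean_leakage_nonneg P H c
  have hguess : 0 ≤ (Fintype.card K * (2 : ℝ) ^ (-(n : ℝ) * α))⁻¹ := by positivity
  subst hG hH
  exact (superposition_isTACode hWc hVc hP hR T c hr hκ (by linarith) (by linarith)).hasTACode

end OneShotCode

section MutualInfo

lemma sum_jointLaw {A B : Type*} [Fintype B] (p : A → ℝ) {P : A → B → ℝ} (hP : IsStochastic P)
    (a : A) : ∑ b, jointLaw p P (a, b) = p a := by
  simp only [jointLaw, ← mul_sum, hP.2, mul_one]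

lemma sum_jointLaw_mul {A B O : Type*} [Fintype B] (p : A → ℝ) (P : A → B → ℝ) (Q : B → O → ℝ)
    (a : A) (o : O) :
    ∑ b, jointLaw p P (a, b) * Q b o = jointLaw p (fun a => outputLaw (P a) Q) (a, o) := by
  simp only [jointLaw, outputLaw, mul_sum, mul_assoc]

variable {A B A' : Type*} [Fintype A] [Fintype B] [Fintype A'] {p : A → ℝ} {P : A → B → ℝ}

/-- The mutual information between an input of law `p` and the corresponding output of the channel
`P`. -/
def mutualInfo (p : A → ℝ) (P : A → B → ℝ) : ℝ :=
  ent (outputLaw p P) - mean p fun a => ent (P a)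

lemma ent_eq_neg_mean (p : A → ℝ) : ent p = -mean p fun a => Real.logb 2 (p a) := rfl

lemma ent_comp_equiv (e : A' ≃ A) (p : A → ℝ) : ent (fun a => p (e a)) = ent p :=
  congrArg Neg.neg (e.sum_comp fun a => p a * Real.logb 2 (p a))

lemma ent_swap (p : A × B → ℝ) : ent (fun ba : B × A => p (ba.2, ba.1)) = ent p :=
  ent_comp_equiv (Equiv.prodComm B A) p

lemma ent_reverse {C : Type*} [Fintype C] (p : (A × B) × C → ℝ) :
    ent (fun cba : C × B × A => p ((cba.2.2, cba.2.1), cba.1)) = ent p :=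
  ent_comp_equiv ((Equiv.prodComm C (B × A)).trans ((Equiv.prodComm B A).prodCongr (.refl C))) p

lemma ent_jointLaw (p : A → ℝ) (hP : IsStochastic P) :
    ent (jointLaw p P) = ent p + mean p fun a => ent (P a) := by
  have hlog : ∀ a b, jointLaw p P (a, b) * Real.logb 2 (jointLaw p P (a, b)) =
      p a * (Real.logb 2 (p a) * P a b + P a b * Real.logb 2 (P a b)) := fun a b => by
    rcases eq_or_ne (p a) 0 with hp | hp
    · simp only [jointLaw, hp, zero_mul]
    rcases eq_or_ne (P a b) 0 with hPab | hPab
    · simp only [jointLaw, hPab, mul_zero, zero_mul, add_zero]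
    · rw [jointLaw, Real.logb_mul hp hPab]
      ring
  simp only [ent, mean, Fintype.sum_prod_type, hlog, ← mul_sum, sum_add_distrib, hP.2, mul_one,
    mul_add, mul_neg, sum_neg_distrib, neg_add]

lemma mutualInfo_eq_mean_logb (p : A → ℝ) (P : A → B → ℝ) :
    mutualInfo p P = mean (jointLaw p P) fun ab =>
      Real.logb 2 (P ab.1 ab.2) - Real.logb 2 (outputLaw p P ab.2) := by
  rw [mean_sub, mean_jointLaw, mean_jointLaw, ← mean_outputLaw p P fun b =>
    Real.logb 2 (outputLaw p P b), mutualInfo, ent_eq_neg_mean, neg_sub_left]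
  simp only [mean, ent, mul_neg, sum_neg_distrib, neg_add, neg_neg]
  ring

lemma mutualInfo_nonneg (hp : p ∈ stdSimplex ℝ A) (hP : IsStochastic P) : 0 ≤ mutualInfo p P := by
  have hent : ∀ μ : B → ℝ, ent μ = (Real.log 2)⁻¹ * ∑ b, Real.negMulLog (μ b) := fun μ => by
    simp only [ent, Real.logb, Real.negMulLog, ← sum_neg_distrib, mul_sum]
    exact sum_congr rfl fun b _ => by ring
  have hjensen : ∀ b, mean p (fun a => Real.negMulLog (P a b)) ≤
      Real.negMulLog (outputLaw p P b) := fun b =>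
    Real.concaveOn_negMulLog.le_map_sum (fun a _ => hp.1 a) hp.2 fun a _ => hP.1 a b
  rw [mutualInfo, sub_nonneg, hent]
  simp only [hent, mean_const_mul, mean_sum]
  gcongr with b
  exact hjensen b

lemma outputLaw_jointLaw {C : Type*} (p : A → ℝ) (P : A → B → ℝ) (G : A × B → C → ℝ) :
    outputLaw (jointLaw p P) G = outputLaw p fun a => outputLaw (P a) fun b => G (a, b) := by
  ext c
  exact mean_jointLaw p P fun ab => G ab c

lemma mutualInfo_jointLaw {C : Type*} [Fintype C] (p : A → ℝ) (P : A → B → ℝ)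
    (G : A × B → C → ℝ) :
    mutualInfo (jointLaw p P) G = mutualInfo p (fun a => outputLaw (P a) fun b => G (a, b)) +
      mean p fun a => mutualInfo (P a) fun b => G (a, b) := by
  simp only [mutualInfo, outputLaw_jointLaw, mean_jointLaw, mean_sub]
  ring

lemma exists_eq_jointLaw [Nonempty B] {q : A × B → ℝ} (hq : q ∈ stdSimplex ℝ (A × B)) :
    ∃ p ∈ stdSimplex ℝ A, ∃ P : A → B → ℝ, IsStochastic P ∧ q = jointLaw p P := by
  have hmarginal : ∀ a, 0 ≤ ∑ b, q (a, b) := fun a => sum_nonneg fun b _ => hq.1 _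
  refine ⟨fun a => ∑ b, q (a, b), ⟨hmarginal, ?_⟩,
    fun a => if ∑ b, q (a, b) = 0 then uniformLaw B else fun b => q (a, b) / ∑ b, q (a, b),
    isStochastic_of_mem_stdSimplex fun a => ?_, ?_⟩
  · rw [← Fintype.sum_prod_type, hq.2]
  · split_ifs with h
    · exact uniformLaw_mem_stdSimplex B
    · exact ⟨fun b => div_nonneg (hq.1 _) (hmarginal a), by rw [← sum_div, div_self h]⟩
  · ext ⟨a, b⟩
    simp only [jointLaw]
    split_ifs with h
    · rw [h, zero_mul]
      exact (sum_eq_zero_iff_of_nonneg fun b _ => hq.1 _).mp h b (mem_univ b)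
    · rw [mul_div_cancel₀ _ h]

end MutualInfo

section MarkovChain

variable {A B X O : Type*} [Fintype A] [Fintype B] [Fintype X] [Fintype O]
  {p : A → ℝ} {P : A → B → ℝ} {R : A × B → X → ℝ} {Ch : X → O → ℝ}

lemma exists_eq_jointLaw_jointLaw [Nonempty B] [Nonempty X] {q : A × B × X → ℝ}
    (hq : q ∈ stdSimplex ℝ (A × B × X)) :
    ∃ p ∈ stdSimplex ℝ A, ∃ P : A → B → ℝ, IsStochastic P ∧ ∃ R : A × B → X → ℝ,
      IsStochastic R ∧ q = fun t => jointLaw (jointLaw p P) R ((t.1, t.2.1), t.2.2) := by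
  have hassoc : (fun t => q (Equiv.prodAssoc A B X t)) ∈ stdSimplex ℝ ((A × B) × X) :=
    ⟨fun _ => hq.1 _, ((Equiv.prodAssoc A B X).sum_comp q).trans hq.2⟩
  obtain ⟨_, hJ, R, hR, hqR⟩ := exists_eq_jointLaw hassoc
  obtain ⟨p, hp, P, hP, rfl⟩ := exists_eq_jointLaw hJ
  exact ⟨p, hp, P, hP, R, hR, funext fun t => congrFun hqR ((t.1, t.2.1), t.2.2)⟩

lemma miO_UW_jointLaw (hR : IsStochastic R) (hCh : IsStochastic Ch) :
    miO_UW (fun t => jointLaw (jointLaw p P) R ((t.1, t.2.1), t.2.2)) Ch =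
      mutualInfo (jointLaw p P) fun a => outputLaw (R a) Ch := by
  have hO : ∀ o, ∑ w, ∑ u, jointLaw (jointLaw p P) (fun a => outputLaw (R a) Ch) ((w, u), o) =
      outputLaw (jointLaw p P) (fun a => outputLaw (R a) Ch) o := fun o =>
    (Fintype.sum_prod_type fun a => jointLaw p P a * outputLaw (R a) Ch o).symm
  simp only [miO_UW, sum_jointLaw _ hR, sum_jointLaw_mul, hO, ent_swap, ent_reverse,
    ent_jointLaw _ (hR.comp hCh), mutualInfo]
  ring

lemma miO_U_W_jointLaw (hP : IsStochastic P) (hR : IsStochastic R) (hCh : IsStochastic Ch) :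
    miO_U_W (fun t => jointLaw (jointLaw p P) R ((t.1, t.2.1), t.2.2)) Ch =
      mean p fun w => mutualInfo (P w) fun u => outputLaw (R (w, u)) Ch := by
  have hOW : ∀ w o, ∑ u, jointLaw (jointLaw p P) (fun a => outputLaw (R a) Ch) ((w, u), o) =
      jointLaw p (fun w => outputLaw (P w) fun u => outputLaw (R (w, u)) Ch) (w, o) := fun w o => by
    simp only [jointLaw, outputLaw, mul_sum, mul_assoc]
  have hG := hR.comp hCh
  have hcloud : IsStochastic fun w => outputLaw (P w) fun u => outputLaw (R (w, u)) Ch :=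
    isStochastic_of_mem_stdSimplex fun w => outputLaw_mem_stdSimplex (hP.mem_stdSimplex w)
      ⟨fun u => hG.1 (w, u), fun u => hG.2 (w, u)⟩
  simp only [miO_U_W, sum_jointLaw _ hR, sum_jointLaw _ hP, sum_jointLaw_mul, hOW, ent_swap,
    ent_reverse, ent_jointLaw _ hG, ent_jointLaw _ hcloud, mutualInfo, mean_sub, mean_jointLaw]
  ring

end MarkovChain

section Memoryless

variable {A B C D : Type*} {n : ℕ}

/-- The blockwise memoryless extension of a channel with a pair of inputs, whose input block is a
pair of blocks rather than a block of pairs. -/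
def memExtPair (G : A × B → C → ℝ) (n : ℕ) : (Fin n → A) × (Fin n → B) → (Fin n → C) → ℝ :=
  fun wu => memExt G n fun i => (wu.1 i, wu.2 i)

lemma isStochastic_memExtPair [Fintype C] {G : A × B → C → ℝ} (hG : IsStochastic G) (n : ℕ) :
    IsStochastic (memExtPair G n) :=
  isStochastic_of_mem_stdSimplex fun _ => (hG.memExt n).mem_stdSimplex _

lemma outputLaw_memExtPair_memExt [Fintype C] (G : A × B → C → ℝ) (Ch : C → D → ℝ) (n : ℕ) :
    (fun wu => outputLaw (memExtPair G n wu) (memExt Ch n)) =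
      memExtPair (fun a => outputLaw (G a) Ch) n :=
  funext fun _ => outputLaw_prodLaw _ _

variable [Fintype B]

lemma outputLaw_memExt_memExtPair (P : A → B → ℝ) (G : A × B → C → ℝ) (w : Fin n → A) :
    outputLaw (memExt P n w) (fun u => memExtPair G n (w, u)) =
      memExt (fun w => outputLaw (P w) fun u => G (w, u)) n w :=
  outputLaw_prodLaw (fun i => P (w i)) fun i u => G (w i, u)

variable [Fintype A]

lemma outputLaw_jointLaw_memExtPair (p : A → ℝ) (P : A → B → ℝ) (G : A × B → C → ℝ) :
    outputLaw (jointLaw (iidLaw (Fin n) p) (memExt P n)) (memExtPair G n) =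
      iidLaw (Fin n) (outputLaw (jointLaw p P) G) :=
  (funext fun y => mean_jointLaw_iidLaw p P fun c => memExt G n c y).trans
    (outputLaw_prodLaw (fun _ => jointLaw p P) fun _ => G)

variable [Fintype C]

lemma mean_jointLaw_memExtPair (p : A → ℝ) (P : A → B → ℝ) (G : A × B → C → ℝ)
    (f : (Fin n → (A × B) × C) → ℝ) :
    mean (jointLaw (jointLaw (iidLaw (Fin n) p) (memExt P n)) (memExtPair G n))
      (fun x => f fun i => ((x.1.1 i, x.1.2 i), x.2 i)) =
      mean (iidLaw (Fin n) (jointLaw (jointLaw p P) G)) f := by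
  calc _ = mean (jointLaw (iidLaw (Fin n) p) (memExt P n)) (fun wu =>
          mean (memExtPair G n wu) fun y => f fun i => ((wu.1 i, wu.2 i), y i)) :=
        mean_jointLaw _ _ _
    _ = mean (iidLaw (Fin n) (jointLaw p P)) (fun ab =>
          mean (memExt G n ab) fun y => f fun i => (ab i, y i)) :=
        mean_jointLaw_iidLaw p P fun ab => mean (memExt G n ab) fun y => f fun i => (ab i, y i)
    _ = mean (jointLaw (iidLaw (Fin n) (jointLaw p P)) (memExt G n))
          (fun x => f fun i => (x.1 i, x.2 i)) :=
        (mean_jointLaw (iidLaw (Fin n) (jointLaw p P)) (memExt G n)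
          fun x => f fun i => (x.1 i, x.2 i)).symm
    _ = _ := mean_jointLaw_iidLaw (jointLaw p P) G f

lemma tendsto_prob_prod_lt_jointLaw_memExtPair {p : A → ℝ} {P : A → B → ℝ} {G : A × B → C → ℝ}
    (hp : p ∈ stdSimplex ℝ A) (hP : IsStochastic P) (hG : IsStochastic G)
    {a b : (A × B) × C → ℝ} (ha : ∀ x, 0 < jointLaw (jointLaw p P) G x → 0 < a x)
    (hb : ∀ x, 0 < jointLaw (jointLaw p P) G x → 0 < b x) {c : ℝ}
    (hc : c < mean (jointLaw (jointLaw p P) G) fun x => Real.logb 2 (a x) - Real.logb 2 (b x)) :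
    Tendsto (fun n : ℕ =>
      prob (jointLaw (jointLaw (iidLaw (Fin n) p) (memExt P n)) (memExtPair G n))
        {x | ∏ i, a ((x.1.1 i, x.1.2 i), x.2 i) <
          (2 : ℝ) ^ (n * c) * ∏ i, b ((x.1.1 i, x.1.2 i), x.2 i)}) atTop (𝓝 0) := by
  have hμ := jointLaw_mem_stdSimplex (jointLaw_mem_stdSimplex hp hP) hG
  exact (tendsto_prob_prod_lt_mul_prod hμ ha hb hc).congr fun n =>
    (mean_jointLaw_memExtPair p P G _).symm

end Memoryless

section TypicalSets

lemma outputLaw_pos {A B : Type*} [Fintype A] {p : A → ℝ} {P : A → B → ℝ} (hp : ∀ a, 0 ≤ p a)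
    {b : B} (hP : ∀ a, 0 ≤ P a b) {a : A} (hab : 0 < p a * P a b) : 0 < outputLaw p P b :=
  sum_pos' (fun a _ => mul_nonneg (hp a) (hP a)) ⟨a, mem_univ a, hab⟩

lemma pos_of_jointLaw_pos {A B : Type*} {p : A → ℝ} {P : A → B → ℝ} (hp : ∀ a, 0 ≤ p a)
    (hP : ∀ a b, 0 ≤ P a b) {ab : A × B} (hab : 0 < jointLaw p P ab) :
    0 < p ab.1 ∧ 0 < P ab.1 ab.2 :=
  ⟨pos_of_mul_pos_left hab (hP _ _), pos_of_mul_pos_right hab (hp _)⟩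

variable {A B C : Type*} [Fintype B] {p : A → ℝ} {P : A → B → ℝ} {G : A × B → C → ℝ} {c c₁ c₂ : ℝ}

lemma outputLaw_pos_of_jointLaw_pos (hp : ∀ a, 0 ≤ p a) (hP : ∀ a b, 0 ≤ P a b)
    (hG : ∀ a c, 0 ≤ G a c) {x : (A × B) × C} (hx : 0 < jointLaw (jointLaw p P) G x) :
    0 < outputLaw (P x.1.1) (fun u => G (x.1.1, u)) x.2 :=
  have ⟨hwu, hGx⟩ := pos_of_jointLaw_pos (fun _ => mul_nonneg (hp _) (hP _ _)) hG hx
  outputLaw_pos (hP _) (fun _ => hG _ _) (mul_pos (pos_of_jointLaw_pos hp hP hwu).2 hGx)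

/-- The blocks `((w, u), y)` for which the channel likelihood of the output `y` is large compared to
its unconditional likelihood and to its likelihood given the cloud center `w`. -/
def decodingTypicalSet [Fintype A] (p : A → ℝ) (P : A → B → ℝ) (G : A × B → C → ℝ) (c₁ c₂ : ℝ)
    (n : ℕ) : Set (((Fin n → A) × (Fin n → B)) × (Fin n → C)) :=
  {x | (2 : ℝ) ^ (n * c₁) * outputLaw (jointLaw (iidLaw (Fin n) p) (memExt P n))
        (memExtPair G n) x.2 ≤ memExtPair G n x.1 x.2 ∧
    (2 : ℝ) ^ (n * c₂) * outputLaw (memExt P n x.1.1)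
        (fun u => memExtPair G n (x.1.1, u)) x.2 ≤ memExtPair G n x.1 x.2}

/-- The blocks `((w, u), z)` for which the channel likelihood of the output `z` is not much larger
than its likelihood given the cloud center `w`. -/
def coveringTypicalSet (P : A → B → ℝ) (G : A × B → C → ℝ) (c : ℝ) (n : ℕ) :
    Set (((Fin n → A) × (Fin n → B)) × (Fin n → C)) :=
  {x | memExtPair G n x.1 x.2 ≤ (2 : ℝ) ^ (n * c) * outputLaw (memExt P n x.1.1)
    (fun u => memExtPair G n (x.1.1, u)) x.2}

variable [Fintype A] [Fintype C]

lemma mean_mutualInfo_eq_mean_logb (p : A → ℝ) (P : A → B → ℝ) (G : A × B → C → ℝ) :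
    (mean p fun w => mutualInfo (P w) fun u => G (w, u)) =
      mean (jointLaw (jointLaw p P) G) fun x => Real.logb 2 (G x.1 x.2) -
        Real.logb 2 (outputLaw (P x.1.1) (fun u => G (x.1.1, u)) x.2) := by
  simp only [mutualInfo_eq_mean_logb, mean_jointLaw]

lemma tendsto_prob_compl_decodingTypicalSet (hp : p ∈ stdSimplex ℝ A) (hP : IsStochastic P)
    (hG : IsStochastic G) (hc₁ : c₁ < mutualInfo (jointLaw p P) G)
    (hc₂ : c₂ < mean p fun w => mutualInfo (P w) fun u => G (w, u)) :
    Tendsto (fun n : ℕ =>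
      prob (jointLaw (jointLaw (iidLaw (Fin n) p) (memExt P n)) (memExtPair G n))
        (decodingTypicalSet p P G c₁ c₂ n)ᶜ) atTop (𝓝 0) := by
  have hpP := jointLaw_mem_stdSimplex hp hP
  have hunion := (tendsto_prob_prod_lt_jointLaw_memExtPair hp hP hG
      (a := fun x => G x.1 x.2) (b := fun x => outputLaw (jointLaw p P) G x.2)
      (fun x hx => (pos_of_jointLaw_pos hpP.1 hG.1 hx).2)
      (fun x hx => outputLaw_pos hpP.1 (fun a => hG.1 a x.2) hx)
      (by rwa [← mutualInfo_eq_mean_logb])).add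
    (tendsto_prob_prod_lt_jointLaw_memExtPair hp hP hG
      (a := fun x => G x.1 x.2) (b := fun x => outputLaw (P x.1.1) (fun u => G (x.1.1, u)) x.2)
      (fun x hx => (pos_of_jointLaw_pos hpP.1 hG.1 hx).2)
      (fun x hx => outputLaw_pos_of_jointLaw_pos hp.1 hP.1 hG.1 hx)
      (by rwa [← mean_mutualInfo_eq_mean_logb]))
  rw [add_zero] at hunion
  have hnonneg := fun n => (jointLaw_mem_stdSimplex (jointLaw_mem_stdSimplex
    (iidLaw_mem_stdSimplex (ι := Fin n) hp) (hP.memExt n)) (isStochastic_memExtPair hG n)).1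
  refine squeeze_zero (fun n => prob_nonneg (hnonneg n) _) (fun n =>
    (prob_mono (hnonneg n) fun x hx => ?_).trans (prob_union_le (hnonneg n) _ _)) hunion
  simp only [decodingTypicalSet, outputLaw_jointLaw_memExtPair, outputLaw_memExt_memExtPair,
    Set.mem_compl_iff, Set.mem_ofPred_eq, not_and_or, not_le] at hx
  exact hx

lemma tendsto_prob_compl_coveringTypicalSet (hp : p ∈ stdSimplex ℝ A) (hP : IsStochastic P)
    (hG : IsStochastic G) (hc : (mean p fun w => mutualInfo (P w) fun u => G (w, u)) < c) :
    Tendsto (fun n : ℕ =>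
      prob (jointLaw (jointLaw (iidLaw (Fin n) p) (memExt P n)) (memExtPair G n))
        (coveringTypicalSet P G c n)ᶜ) atTop (𝓝 0) := by
  have hpP := jointLaw_mem_stdSimplex hp hP
  refine (tendsto_prob_prod_lt_jointLaw_memExtPair hp hP hG (c := -c)
    (a := fun x => outputLaw (P x.1.1) (fun u => G (x.1.1, u)) x.2) (b := fun x => G x.1 x.2)
    (fun x hx => outputLaw_pos_of_jointLaw_pos hp.1 hP.1 hG.1 hx)
    (fun x hx => (pos_of_jointLaw_pos hpP.1 hG.1 hx).2) ?_).congr fun n => ?_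
  · rw [mean_mutualInfo_eq_mean_logb, mean_sub] at hc
    rw [mean_sub]
    linarith
  · congr 1
    ext x
    simp only [coveringTypicalSet, outputLaw_memExt_memExtPair, Set.mem_compl_iff,
      Set.mem_ofPred_eq, not_le, mul_neg, Real.rpow_neg two_pos.le]
    exact lt_inv_mul_iff₀ (by positivity)

end TypicalSets

section CodeSize

variable {a b c d r : ℝ} {n : ℕ}

/-- The number of indices of rate `c` available at blocklength `n`. -/
def codeSize (n : ℕ) (c : ℝ) : ℕ := ⌊(2 : ℝ) ^ (n * c)⌋₊

lemma codeSize_le (n : ℕ) (c : ℝ) : (codeSize n c : ℝ) ≤ 2 ^ (n * c) :=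
  Nat.floor_le (by positivity)

lemma codeSize_pos (hc : 0 ≤ c) : 0 < codeSize n c :=
  Nat.floor_pos.mpr (Real.one_le_rpow one_le_two (by positivity))

lemma lt_two_mul_codeSize (hc : 0 ≤ c) : (2 : ℝ) ^ (n * c) < 2 * codeSize n c := by
  have hone : (1 : ℝ) ≤ codeSize n c := Nat.one_le_cast.mpr (codeSize_pos hc)
  have hfloor : (2 : ℝ) ^ (n * c) < codeSize n c + 1 := Nat.lt_floor_add_one _
  linarith

lemma logb_codeSize_div_le (hc : 0 ≤ c) : Real.logb 2 (codeSize n c) / n ≤ c := by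
  refine div_le_of_le_mul₀ n.cast_nonneg hc ?_
  rw [Real.logb_le_iff_le_rpow one_lt_two (Nat.cast_pos.mpr (codeSize_pos hc)), mul_comm]
  exact codeSize_le n c

lemma eventually_le_logb_codeSize_mul (ha : 0 ≤ a) (hb : 0 ≤ b) (hr : r < a + b) :
    ∀ᶠ n : ℕ in atTop, r ≤ Real.logb 2 (codeSize n a * codeSize n b) / n := by
  have hlim : Tendsto (fun n : ℕ => 2 / (n : ℝ)) atTop (𝓝 0) :=
    tendsto_const_div_atTop_nhds_zero_nat 2
  filter_upwards [hlim.eventually_le_const (sub_pos.mpr hr), eventually_gt_atTop 0] with n hn hpos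
  rw [div_le_iff₀ (by positivity)] at hn
  rw [le_div_iff₀ (by positivity)]
  have hA := Nat.cast_pos (α := ℝ).mpr (codeSize_pos (n := n) ha)
  have hB := Nat.cast_pos (α := ℝ).mpr (codeSize_pos (n := n) hb)
  have hproduct : (2 : ℝ) ^ (n * a) * 2 ^ (n * b) ≤ 2 ^ (2 : ℝ) * (codeSize n a * codeSize n b) :=
    calc (2 : ℝ) ^ (n * a) * 2 ^ (n * b) ≤ (2 * codeSize n a) * (2 * codeSize n b) := by
          gcongr <;> exact (lt_two_mul_codeSize ‹_›).le
      _ = _ := by norm_num; ring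
  have hlog := Real.logb_le_logb_of_le one_lt_two (by positivity) hproduct
  rw [← Real.rpow_add two_pos, Real.logb_mul (by positivity) (by positivity),
    Real.logb_rpow two_pos (by norm_num), Real.logb_rpow two_pos (by norm_num)] at hlog
  linarith

lemma tendsto_two_rpow_nat_mul (hc : c < 0) :
    Tendsto (fun n : ℕ => (2 : ℝ) ^ (n * c)) atTop (𝓝 0) := by
  simp only [mul_comm, Real.rpow_mul_natCast two_pos.le]
  exact tendsto_pow_atTop_nhds_zero_of_lt_one (by positivity)
    (Real.rpow_lt_one_of_one_lt_of_neg one_lt_two hc)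

lemma mul_le_two_rpow {x y : ℝ} (hy₀ : 0 ≤ y) (hx : x ≤ 2 ^ (n * a)) (hy : y ≤ 2 ^ (n * b)) :
    x * y ≤ 2 ^ (n * (a + b)) := by
  rw [mul_add, Real.rpow_add two_pos]
  exact mul_le_mul hx hy hy₀ (by positivity)

lemma tendsto_div_two_rpow {f : ℕ → ℝ} (hf₀ : ∀ n, 0 ≤ f n) (hf : ∀ n, f n ≤ 2 ^ (n * a))
    (had : a < d) : Tendsto (fun n : ℕ => f n / 2 ^ (n * d)) atTop (𝓝 0) := by
  refine squeeze_zero (fun n => div_nonneg (hf₀ n) (by positivity)) (fun n => ?_)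
    (tendsto_two_rpow_nat_mul (sub_neg.mpr had))
  rw [mul_sub, Real.rpow_sub two_pos]
  exact div_le_div_of_nonneg_right (hf n) (by positivity)

lemma tendsto_two_rpow_div_codeSize (hc : 0 ≤ c) (h : d < c) :
    Tendsto (fun n : ℕ => (2 : ℝ) ^ (n * d) / codeSize n c) atTop (𝓝 0) := by
  have hlim := (tendsto_two_rpow_nat_mul (sub_neg.mpr h)).const_mul 2
  rw [mul_zero] at hlim
  refine squeeze_zero (fun n => by positivity) (fun n => ?_) hlim
  rw [div_le_iff₀ (Nat.cast_pos.mpr (codeSize_pos hc))]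
  calc (2 : ℝ) ^ (n * d) = 2 ^ (n * (d - c)) * 2 ^ (n * c) := by
        rw [← Real.rpow_add two_pos]
        ring_nf
    _ ≤ 2 ^ (n * (d - c)) * (2 * codeSize n c) := by gcongr; exact (lt_two_mul_codeSize hc).le
    _ = _ := by ring

end CodeSize

section Achievability

variable {A B : Type*} [Fintype A] [Fintype B] {Wc : 𝒳 → 𝒴 → ℝ} {Vc : 𝒳 → 𝒵 → ℝ} {p : A → ℝ}
  {P : A → B → ℝ} {R : A × B → 𝒳 → ℝ} {r α κ δ : ℝ}

/-- Bound on the error of the random superposition code with `2 ^ (n * ρ₀)` cloud centers, each with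
`2 ^ (n * ρ₁)` satellites for every one of the `2 ^ (n * ρ₂)` keys, for the typicality exponents
`c₁`, `c₂` (decoding) and `c₃` (covering). -/
def superpositionErrorBound (p : A → ℝ) (P : A → B → ℝ) (G : A × B → 𝒴 → ℝ) (H : A × B → 𝒵 → ℝ)
    (ρ₀ ρ₁ ρ₂ c₁ c₂ c₃ α : ℝ) (n : ℕ) : ℝ :=
  prob (jointLaw (jointLaw (iidLaw (Fin n) p) (memExt P n)) (memExtPair G n))
      (decodingTypicalSet p P G c₁ c₂ n)ᶜ +
    (codeSize n ρ₀ * (codeSize n ρ₁ * codeSize n ρ₂) / 2 ^ (n * c₁) +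
      codeSize n ρ₁ * codeSize n ρ₂ / 2 ^ (n * c₂)) +
    (√(2 ^ (n * c₃) / codeSize n ρ₁) +
      prob (jointLaw (jointLaw (iidLaw (Fin n) p) (memExt P n)) (memExtPair H n))
        (coveringTypicalSet P H c₃ n)ᶜ) +
    2 ^ (n * α) / codeSize n ρ₂

lemma hasTACode_of_superpositionErrorBound_le (hWc : IsStochastic Wc) (hVc : IsStochastic Vc)
    (hp : p ∈ stdSimplex ℝ A) (hP : IsStochastic P) (hR : IsStochastic R) {n : ℕ}
    {ρ₀ ρ₁ ρ₂ c₁ c₂ c₃ : ℝ} (hρ₀ : 0 ≤ ρ₀) (hρ₁ : 0 ≤ ρ₁) (hρ₂ : 0 ≤ ρ₂) (hκ : ρ₂ ≤ κ)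
    (hr : r ≤ Real.logb 2 (codeSize n ρ₀ * codeSize n ρ₁) / n)
    (hδ : superpositionErrorBound p P (fun a => outputLaw (R a) Wc) (fun a => outputLaw (R a) Vc)
      ρ₀ ρ₁ ρ₂ c₁ c₂ c₃ α n ≤ δ) :
    HasTACode Wc Vc r α κ δ n := by
  have := Fin.pos_iff_nonempty.mp (codeSize_pos (n := n) hρ₀)
  have := Fin.pos_iff_nonempty.mp (codeSize_pos (n := n) hρ₁)
  have := Fin.pos_iff_nonempty.mp (codeSize_pos (n := n) hρ₂)
  refine hasTACode_of_typicalSets (I := Fin (codeSize n ρ₀)) (L := Fin (codeSize n ρ₁))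
    (K := Fin (codeSize n ρ₂)) hWc hVc (iidLaw_mem_stdSimplex hp) (hP.memExt n)
    (isStochastic_memExtPair hR n) (outputLaw_memExtPair_memExt R Wc n).symm
    (outputLaw_memExtPair_memExt R Vc n).symm
    (T := decodingTypicalSet p P (fun a => outputLaw (R a) Wc) c₁ c₂ n)
    (S := coveringTypicalSet P (fun a => outputLaw (R a) Vc) c₃ n)
    (t₁ := 2 ^ (n * c₁)) (t₂ := 2 ^ (n * c₂)) (s := 2 ^ (n * c₃))
    (by positivity) (by positivity) (by positivity)
    (fun _ _ h => h.1) (fun _ _ _ h => h.2) (fun _ _ _ h => h) ?_ ?_ ?_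
  · simpa only [Fintype.card_prod, Fintype.card_fin, Nat.cast_mul] using hr
  · simpa only [Fintype.card_fin] using (logb_codeSize_div_le hρ₂).trans hκ
  · have hguess : (codeSize n ρ₂ * (2 : ℝ) ^ (-(n : ℝ) * α))⁻¹ = 2 ^ (n * α) / codeSize n ρ₂ := by
      rw [neg_mul, Real.rpow_neg two_pos.le, mul_inv_rev, inv_inv, div_eq_mul_inv]
    simpa only [superpositionErrorBound, Fintype.card_prod, Fintype.card_fin, Nat.cast_mul,
      hguess] using hδ

lemma tendsto_superpositionErrorBound (hp : p ∈ stdSimplex ℝ A) (hP : IsStochastic P)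
    {G : A × B → 𝒴 → ℝ} (hG : IsStochastic G) {H : A × B → 𝒵 → ℝ} (hH : IsStochastic H)
    {ρ₀ ρ₁ ρ₂ c₁ c₂ c₃ : ℝ} (hρ₁ : 0 ≤ ρ₁) (hρ₂ : 0 ≤ ρ₂)
    (hdecode : ρ₀ + (ρ₁ + ρ₂) < c₁) (hc₁ : c₁ < mutualInfo (jointLaw p P) G)
    (hdecode_cloud : ρ₁ + ρ₂ < c₂)
    (hc₂ : c₂ < mean p fun w => mutualInfo (P w) fun u => G (w, u))
    (hcover : c₃ < ρ₁) (hc₃ : (mean p fun w => mutualInfo (P w) fun u => H (w, u)) < c₃)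
    (hα : α < ρ₂) :
    Tendsto (superpositionErrorBound p P G H ρ₀ ρ₁ ρ₂ c₁ c₂ c₃ α) atTop (𝓝 0) := by
  have hconfusion : ∀ n : ℕ, (codeSize n ρ₁ * codeSize n ρ₂ : ℝ) ≤ 2 ^ (n * (ρ₁ + ρ₂)) := fun n =>
    mul_le_two_rpow (Nat.cast_nonneg _) (codeSize_le n _) (codeSize_le n _)
  have hall := tendsto_div_two_rpow (fun n => by positivity)
    (fun n => mul_le_two_rpow (by positivity) (codeSize_le n ρ₀) (hconfusion n)) hdecode
  have hcloud := tendsto_div_two_rpow (fun n => by positivity) hconfusion hdecode_cloud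
  have hcovering := (tendsto_two_rpow_div_codeSize hρ₁ hcover).sqrt
  rw [Real.sqrt_zero] at hcovering
  have hsum := (((tendsto_prob_compl_decodingTypicalSet hp hP hG hc₁ hc₂).add
    (hall.add hcloud)).add (hcovering.add (tendsto_prob_compl_coveringTypicalSet hp hP hH hc₃))).add
    (tendsto_two_rpow_div_codeSize hρ₂ hα)
  simp only [add_zero] at hsum
  exact hsum

lemma eventually_hasTACode (hWc : IsStochastic Wc) (hVc : IsStochastic Vc)
    (hp : p ∈ stdSimplex ℝ A) (hP : IsStochastic P) (hR : IsStochastic R) {ρ₀ ρ₁ ρ₂ : ℝ}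
    (hρ₀ : 0 ≤ ρ₀) (hρ₁ : 0 ≤ ρ₁) (hρ₂ : 0 ≤ ρ₂)
    (hdecode : ρ₀ + (ρ₁ + ρ₂) < mutualInfo (jointLaw p P) fun a => outputLaw (R a) Wc)
    (hdecode_cloud :
      ρ₁ + ρ₂ < mean p fun w => mutualInfo (P w) fun u => outputLaw (R (w, u)) Wc)
    (hcover : (mean p fun w => mutualInfo (P w) fun u => outputLaw (R (w, u)) Vc) < ρ₁)
    (hr : r < ρ₀ + ρ₁) (hα : α < ρ₂) (hκ : ρ₂ ≤ κ) (hδ : 0 < δ) :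
    ∀ᶠ n in atTop, HasTACode Wc Vc r α κ δ n := by
  obtain ⟨c₁, hdecode, hc₁⟩ := exists_between hdecode
  obtain ⟨c₂, hdecode_cloud, hc₂⟩ := exists_between hdecode_cloud
  obtain ⟨c₃, hc₃, hcover⟩ := exists_between hcover
  have herror := tendsto_superpositionErrorBound hp hP (hR.comp hWc) (hR.comp hVc) hρ₁ hρ₂
    hdecode hc₁ hdecode_cloud hc₂ hcover hc₃ hα
  filter_upwards [herror.eventually_le_const hδ, eventually_le_logb_codeSize_mul hρ₀ hρ₁ hr]
    with n hn hrate
  exact hasTACode_of_superpositionErrorBound_le hWc hVc hp hP hR hρ₀ hρ₁ hρ₂ hκ hrate hn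

/-- The rates leave a margin `ε / 4` in each constraint of `eventually_hasTACode`. -/
lemma eventually_hasTACode_of_le_mutualInfo (hWc : IsStochastic Wc) (hVc : IsStochastic Vc)
    (hp : p ∈ stdSimplex ℝ A) (hP : IsStochastic P) (hR : IsStochastic R)
    (hrα : r + α ≤ mutualInfo (jointLaw p P) fun a => outputLaw (R a) Wc)
    (hα : α ≤ (mean p fun w => mutualInfo (P w) fun u => outputLaw (R (w, u)) Wc) -
      mean p fun w => mutualInfo (P w) fun u => outputLaw (R (w, u)) Vc)
    (hακ : α ≤ κ) {ε : ℝ} (hε : 0 < ε) (hεα : ε ≤ α) (hδ : 0 < δ) :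
    ∀ᶠ n in atTop, HasTACode Wc Vc r (α - ε) κ δ n := by
  have hG := hR.comp hWc
  have hH := hR.comp hVc
  have hchain := mutualInfo_jointLaw p P fun a => outputLaw (R a) Wc
  have hcloud : 0 ≤ mutualInfo p fun w => outputLaw (P w) fun u => outputLaw (R (w, u)) Wc :=
    mutualInfo_nonneg hp <| isStochastic_of_mem_stdSimplex fun w =>
      outputLaw_mem_stdSimplex (hP.mem_stdSimplex w) ⟨fun u => hG.1 (w, u), fun u => hG.2 (w, u)⟩
  have hleak : 0 ≤ mean p fun w => mutualInfo (P w) fun u => outputLaw (R (w, u)) Vc :=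
    mean_nonneg hp.1 fun w =>
      mutualInfo_nonneg (hP.mem_stdSimplex w) ⟨fun u => hH.1 (w, u), fun u => hH.2 (w, u)⟩
  set satellite := mean p fun w => mutualInfo (P w) fun u => outputLaw (R (w, u)) Wc
  refine eventually_hasTACode hWc hVc hp hP hR hcloud
    (ρ₁ := satellite - α + ε / 4) (ρ₂ := α - ε / 2) ?_ ?_ ?_ ?_ ?_ ?_ ?_ ?_ hδ <;>
  linarith

end Achievability

section CapacityRegion

variable {Wc : 𝒳 → 𝒴 → ℝ} {Vc : 𝒳 → 𝒵 → ℝ} {r α κ : ℝ}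

/-- The receiver rejects everything, so that no forgery succeeds but every message is lost. -/
lemma hasTACode_one [Nonempty 𝒳] (Wc : 𝒳 → 𝒴 → ℝ) (Vc : 𝒳 → 𝒵 → ℝ) (r α : ℝ) (hκ : 0 ≤ κ) {n : ℕ}
    (hn : 0 < n) : HasTACode Wc Vc r α κ 1 n := by
  let f : Fin ⌈(2 : ℝ) ^ (n * r)⌉₊ × Fin 1 → (Fin n → 𝒳) → ℝ := fun _ => uniformLaw (Fin n → 𝒳)
  let φ : (Fin n → 𝒴) × Fin 1 → Option (Fin ⌈(2 : ℝ) ^ (n * r)⌉₊) → ℝ := fun _ => Pi.single none 1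
  have hf : IsStochastic f := isStochastic_of_mem_stdSimplex fun _ => uniformLaw_mem_stdSimplex _
  have hφ : IsStochastic φ := isStochastic_of_mem_stdSimplex fun _ => single_mem_stdSimplex ℝ none
  have hreject : ∀ y m, φ y (some m) = 0 := fun _ m => Pi.single_eq_of_ne (Option.some_ne_none m) 1
  refine ⟨_, _, f, φ, hf, hφ, ?_, ?_, ?_, fun ψ _ => ?_⟩
  · rw [Fintype.card_fin, le_div_iff₀ (by positivity), mul_comm,
      Real.le_logb_iff_rpow_le one_lt_two (Nat.cast_pos.mpr (Nat.ceil_pos.mpr (by positivity)))]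
    exact Nat.le_ceil _
  · simpa only [Fintype.card_fin, Nat.cast_one, Real.logb_one, zero_div] using hκ
  · simp only [hreject, mul_zero, sum_const_zero, sub_zero, le_refl]
  · have hnot : ¬(2 : ℝ) ^ (-(n : ℝ) * α) < 0 := not_lt.mpr (by positivity)
    simp only [hreject, mul_zero, sum_const_zero, hnot, if_false, zero_le_one]

lemma exists_tendsto_zero_of_eventually {Q : ℝ → ℕ → Prop}
    (hmono : ∀ ⦃ε ε' n⦄, ε ≤ ε' → Q ε n → Q ε' n) (hone : ∀ n, 0 < n → Q 1 n)
    (hQ : ∀ ε, 0 < ε → ∀ᶠ n in atTop, Q ε n) :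
    ∃ εs : ℕ → ℝ, (∀ n, 0 < n → Q (εs n) n) ∧ Tendsto εs atTop (𝓝 0) := by
  let admissible : ℕ → Set ℝ := fun n => {ε | 0 < ε ∧ Q ε n}
  have hinf : Tendsto (fun n => sInf (admissible n)) atTop (𝓝 0) := by
    refine tendsto_order.mpr ⟨fun a ha => .of_forall fun n =>
      ha.trans_le (Real.sInf_nonneg fun ε hε => hε.1.le), fun a ha => ?_⟩
    filter_upwards [hQ (a / 2) (half_pos ha)] with n hn
    have hmem : a / 2 ∈ admissible n := ⟨half_pos ha, hn⟩
    exact (csInf_le ⟨0, fun ε hε => hε.1.le⟩ hmem).trans_lt (half_lt_self ha)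
  refine ⟨fun n => sInf (admissible n) + 1 / (n + 1), fun n hn => ?_, ?_⟩
  · have hne : (admissible n).Nonempty := ⟨1, one_pos, hone n hn⟩
    obtain ⟨ε, hε, hlt⟩ := exists_lt_of_csInf_lt hne
      (lt_add_of_pos_right _ (by positivity : (0 : ℝ) < 1 / (n + 1)))
    exact hmono hlt.le hε.2
  · simpa only [add_zero] using hinf.add tendsto_one_div_add_atTop_nhds_zero_nat

lemma mem_CTA_of_eventually_hasTACode [Nonempty 𝒳] (hVc : IsStochastic Vc) (hr : 0 < r)
    (hκ : 0 ≤ κ) (h : ∀ ε, 0 < ε → ∀ᶠ n in atTop, HasTACode Wc Vc r (α - ε) κ ε n) :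
    (r, α, κ) ∈ CTA Wc Vc := by
  obtain ⟨εs, hcodes, hεs⟩ := exists_tendsto_zero_of_eventually
    (Q := fun ε n => HasTACode Wc Vc r (α - ε) κ ε n)
    (fun _ _ _ hle hcode => hcode.mono hVc (sub_le_sub_left hle α) hle)
    (fun _ hn => hasTACode_one Wc Vc r (α - 1) hκ hn) h
  have hα : Tendsto (fun n => α - εs n) atTop (𝓝 α) := by
    simpa only [sub_zero] using hεs.const_sub α
  refine ⟨hr, fun _ => r, fun n => α - εs n, fun _ => κ, εs, hcodes, ?_⟩
  exact tendsto_const_nhds.prodMk_nhds (hα.prodMk_nhds (tendsto_const_nhds.prodMk_nhds hεs))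

end CapacityRegion

/-- Theorem 2 / `thm:lai`-type inner bound: if there exist finitely
supported random variables `W, U, X` with `(U,W) → X → (Y,Z)` a Markov chain (the
joint law of `(W,U,X)` is `q`, and `Y`, `Z` are obtained from `X` through the
channels `Wc = p_{Y|X}` and `Vc = p_{Z|X}`) such that `r + α ≤ I(Y;U,W)`,
`α ≤ I(Y;U|W) − I(Z;U|W)` and `α − κ ≤ 0`, then `(r,α,κ) ∈ C_TA(p_{Y|X},p_{Z|X})`. -/
theorem statement0 {𝒳 𝒴 𝒵 : Type} [Fintype 𝒳] [Fintype 𝒴] [Fintype 𝒵]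
    (Wc : 𝒳 → 𝒴 → ℝ) (Vc : 𝒳 → 𝒵 → ℝ)
    (hWc : IsStochastic Wc) (hVc : IsStochastic Vc)
    (r α κ : ℝ) (hr : 0 < r) (hα : 0 < α) (hκ : 0 < κ)
    {𝒲 𝒰 : Type} [Fintype 𝒲] [Fintype 𝒰]
    (q : 𝒲 × 𝒰 × 𝒳 → ℝ) (hq0 : ∀ t, 0 ≤ q t) (hq1 : ∑ t, q t = 1)
    (h1 : r + α ≤ miO_UW q Wc)
    (h2 : α ≤ miO_U_W q Wc - miO_U_W q Vc)
    (h3 : α - κ ≤ 0) :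
    (r, α, κ) ∈ CTA Wc Vc := by
  obtain ⟨_, u₀, x₀⟩ : Nonempty (𝒲 × 𝒰 × 𝒳) :=
    univ_nonempty_iff.mp (nonempty_of_sum_ne_zero (hq1.trans_ne one_ne_zero))
  have : Nonempty 𝒰 := ⟨u₀⟩
  have : Nonempty 𝒳 := ⟨x₀⟩
  obtain ⟨p, hp, P, hP, R, hR, rfl⟩ := exists_eq_jointLaw_jointLaw ⟨hq0, hq1⟩
  rw [miO_UW_jointLaw hR hWc] at h1
  rw [miO_U_W_jointLaw hP hR hWc, miO_U_W_jointLaw hP hR hVc] at h2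
  refine mem_CTA_of_eventually_hasTACode hVc hr hκ.le fun ε hε => ?_
  filter_upwards [eventually_hasTACode_of_le_mutualInfo hWc hVc hp hP hR h1 h2 (sub_nonpos.mp h3)
    (lt_min hε hα) (min_le_right ε α) hε] with n hcode
  exact hcode.mono hVc (sub_le_sub_left (min_le_left ε α) α) le_rfl
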